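/- arXiv:2210.02103 — 6 statements merged into one kernel-verified Lean document; each statement's English description precedes it below -/
import Mathlib

section
/- Let k = ℚ(t) with the derivation t′ = 1, let Q = (1,t)_k be the quaternion algebra with generators u, v satisfying u² = 1, v² = t, vu = −uv, and let d = d_{(u,v)} + ∂_ϑ with ϑ = −(1/(4t))u − v. Then every differential field extension of (k,′) that splits (Q,d) has transcendence degree at least 3 over k. -/
open scoped TensorProduct

/-- A derivation on a (possibly noncommutative) ring: an additive map satisfying the
Leibniz rule. -/
structure IsRingDeriv {A : Type*} [Ring A] (d : A → A) : Prop where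
  map_add : ∀ x y, d (x + y) = d x + d y
  leibniz : ∀ x y, d (x * y) = d x * y + x * d y

/-- The derivation `d` on the `k`-algebra `A` restricts to the derivation `δ` on `k`
(along `algebraMap k A`). -/
def RestrictsTo {k A : Type*} [CommRing k] [Ring A] [Algebra k A]
    (δ : k → k) (d : A → A) : Prop :=
  ∀ c : k, d (algebraMap k A c) = algebraMap k A (δ c)

/-- The differential algebra `(Q, d)` over `(k, δk)` is split by the differential field
`(L, δL)`: there is an `L`-algebra isomorphism `L ⊗[k] Q ≃ M₂(L)` intertwining the
induced derivation `d* = δL ⊗ id + id ⊗ d` with the coordinate-wise derivation on `M₂(L)`. -/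
def DiffSplits (k : Type*) [Field k] (Q : Type*) [Ring Q] [Algebra k Q]
    (d : Q → Q) (L : Type*) [Field L] [Algebra k L] (δL : L → L) : Prop :=
  ∃ D : L ⊗[k] Q → L ⊗[k] Q,
    IsRingDeriv D ∧
    (∀ (y : L) (x : Q), D (y ⊗ₜ[k] x) = δL y ⊗ₜ[k] x + y ⊗ₜ[k] d x) ∧
    ∃ φ : (L ⊗[k] Q) ≃ₐ[L] Matrix (Fin 2) (Fin 2) L,
      ∀ z, φ (D z) = (φ z).map δL

/-- The transcendence degree of `L` over `k` is at least `n`: there are `n` algebraically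
independent elements. -/
def TrdegGE (k L : Type*) [CommRing k] [CommRing L] [Algebra k L] (n : ℕ) : Prop :=
  ∃ f : Fin n → L, AlgebraicIndependent k f

/-- The transcendence degree of `L` over `k` is at most `n`: there is no algebraically
independent family of `n + 1` elements. -/
def TrdegLE (k L : Type*) [CommRing k] [CommRing L] [Algebra k L] (n : ℕ) : Prop :=
  ∀ f : Fin (n + 1) → L, ¬ AlgebraicIndependent k f

section helpers

open Polynomial Differential

/-- the map `c(t) ↦ c(s²)` -/
noncomputable def airyIota (c : ℚ[X]) : ℚ[X][X] := C (expand ℚ 2 c)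

/-- homogenization -/
noncomputable def airyHom (p m : ℚ[X][X]) (n : ℕ) (f : ℚ[X][X]) : ℚ[X][X] :=
  ∑ i ∈ Finset.range (n + 1), airyIota (f.coeff i) * p ^ i * m ^ (n - i)

lemma airyHom_add (p m : ℚ[X][X]) (n : ℕ) (f g : ℚ[X][X]) :
    airyHom p m n (f + g) = airyHom p m n f + airyHom p m n g := by
  simp [airyHom, airyIota, ← Finset.sum_add_distrib, add_mul]

lemma airyHom_C_mul (p m : ℚ[X][X]) (n : ℕ) (c : ℚ[X]) (f : ℚ[X][X]) :
    airyHom p m n (C c * f) = airyIota c * airyHom p m n f := by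
  simp [airyHom, airyIota, Finset.mul_sum, mul_assoc]

lemma airyHom_mono (p m : ℚ[X][X]) (n i : ℕ) (hi : i ≤ n) (c : ℚ[X]) :
    airyHom p m n (C c * X ^ i) = airyIota c * p ^ i * m ^ (n - i) := by
  rw [airyHom, Finset.sum_eq_single i]
  · simp
  · intro b _ hb
    simp [coeff_X_pow, hb, airyIota]
  · intro h
    exact absurd (Finset.mem_range.2 (by omega)) h

lemma airyHom_succ (p m : ℚ[X][X]) (n : ℕ) (f : ℚ[X][X]) (hf : f.natDegree ≤ n) :
    airyHom p m (n+1) f = m * airyHom p m n f := by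
  rw [airyHom, Finset.sum_range_succ, coeff_eq_zero_of_natDegree_lt (by omega), airyHom,
    Finset.mul_sum]
  simp only [airyIota, map_zero, zero_mul, add_zero]
  refine Finset.sum_congr rfl fun i hi => ?_
  rw [Finset.mem_range] at hi
  rw [show n + 1 - i = (n - i) + 1 by omega, pow_succ]; ring

lemma airy_key (T : ℚ[X][X] → ℚ[X][X]) (n : ℕ)
    (hTadd : ∀ f g, T (f + g) = T f + T g)
    (hT : ∀ (c : ℚ[X]) (i : ℕ), T (C c * X ^ i) = C (derivative c) * X ^ i
      + (C X - X ^ 2) * (C c * ((i : ℚ[X][X]) * X ^ (i - 1))) + (n : ℚ[X][X]) * X * (C c * X ^ i))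
    (E : Derivation ℤ ℚ[X][X] ℚ[X][X]) (p m κ : ℚ[X][X])
    (hι : ∀ c : ℚ[X], E (airyIota c) = 4 * C X ^ 2 * airyIota (derivative c))
    (hp : E p = 4 * C X ^ 4 * m + κ * p) (hm : E m = 4 * C X ^ 2 * p + κ * m)
    (f : ℚ[X][X]) (hf : f.natDegree ≤ n) :
    m * E (airyHom p m n f) = (n : ℚ[X][X]) * κ * m * airyHom p m n f
      + 4 * C X ^ 2 * airyHom p m (n + 1) (T f) := by
  have hT0 : T 0 = 0 := by simpa using hTadd 0 0
  refine induction_with_natDegree_le (fun f => m * E (airyHom p m n f) = (n : ℚ[X][X]) * κ * m * airyHom p m n f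
      + 4 * C X ^ 2 * airyHom p m (n + 1) (T f)) n ?_ ?_ ?_ f hf
  · simp [hT0, airyHom, airyIota]
  · intro i c _ hi
    obtain ⟨j, rfl⟩ := Nat.exists_eq_add_of_le hi
    have hX : airyIota X = C X ^ 2 := by simp [airyIota]
    have hTT : T (C c * X ^ i) = C (derivative c) * X ^ i
        + C (X * c * (i : ℚ[X])) * X ^ (i - 1) + C ((j : ℚ[X]) * c) * X ^ (i + 1) := by
      rw [hT]
      rcases i with _ | i
      · simp; ring
      · simp; ring
    have hιm : ∀ a b, airyIota (a * b) = airyIota a * airyIota b := by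
      intro a b; simp [airyIota]
    have hιn : ∀ a : ℕ, airyIota (a : ℚ[X]) = a := by
      intro a; simp [airyIota]
    rw [hTT, airyHom_mono _ _ _ _ hi, airyHom_add, airyHom_add, airyHom_mono _ _ _ _ (by omega),
      airyHom_mono _ _ _ _ (by omega), airyHom_mono _ _ _ _ (by omega)]
    rw [show i + j - i = j by omega, show i + j + 1 - i = j + 1 by omega,
      show i + j + 1 - (i + 1) = j by omega]
    simp only [Derivation.leibniz, Derivation.leibniz_pow, hι, hp, hm, hιm, hιn, hX, smul_eq_mul,
      nsmul_eq_mul]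
    rcases i with _ | i
    · rcases j with _ | j
      · simp; ring
      · simp; ring
    · rw [show i + 1 + j + 1 - (i + 1 - 1) = j + 2 by omega]
      rcases j with _ | j
      · simp; ring
      · simp; ring
  · intro f g _ _ h1 h2
    simp only [airyHom_add, hTadd, map_add, mul_add, h1, h2]; ring

lemma airy_core [Differential ℚ[X]] (hd : ∀ p : ℚ[X], p′ = derivative p) (f : ℚ[X][X]) (hf : f ≠ 0)
    (μ : ℚ[X])
    (hode : implicitDeriv (C X - X ^ 2 : ℚ[X][X]) f = (C μ - (f.natDegree : ℚ[X][X]) * X) * f) :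
    f.natDegree = 0 := by
  obtain ⟨n, hn⟩ : ∃ n, n = f.natDegree := ⟨_, rfl⟩
  rw [← hn] at hode ⊢
  obtain ⟨T, hTdef⟩ : ∃ T : ℚ[X][X] → ℚ[X][X], T = fun f => implicitDeriv (C X - X ^ 2 : ℚ[X][X]) f
      + (n : ℚ[X][X]) * X * f := ⟨_, rfl⟩
  have hT1 : ∀ f g, T (f + g) = T f + T g := by
    intro f g; simp [hTdef]; ring
  have hT2 : ∀ (c : ℚ[X]) (i : ℕ), T (C c * X ^ i) = C (derivative c) * X ^ i
      + (C X - X ^ 2) * (C c * ((i : ℚ[X][X]) * X ^ (i - 1)))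
      + (n : ℚ[X][X]) * X * (C c * X ^ i) := by
    intro c i
    simp only [hTdef, Derivation.leibniz, Derivation.leibniz_pow, implicitDeriv_C, implicitDeriv_X,
      hd, smul_eq_mul, nsmul_eq_mul]; ring
  have hTf : T f = C μ * f := by
    simp only [hTdef, hode]; ring
  clear hTdef hode
  have hC2 : (C 2 : ℚ[X][X]) = 2 := map_ofNat C 2
  have hC4 : (C 4 : ℚ[X][X]) = 4 := map_ofNat C 4
  have hC8 : (C 8 : ℚ[X][X]) = 8 := map_ofNat C 8
  have hc2 : (C 2 : ℚ[X]) = 2 := map_ofNat C 2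
  have hc4 : (C 4 : ℚ[X]) = 4 := map_ofNat C 4
  let I : Differential ℚ[X] := ⟨(2 * X : ℚ[X]) • derivative'.restrictScalars ℤ⟩
  have hI : ∀ c, I.deriv c = 2 * X * derivative c := fun c => rfl
  let v : ℚ[X][X] := 8 * C X ^ 3 * X - 1 + X ^ 2
  let E : Derivation ℤ ℚ[X][X] ℚ[X][X] := @implicitDeriv _ _ I v
  have hEC : ∀ c, E (C c) = C (2 * X * derivative c) := fun c =>
    (@implicitDeriv_C _ _ I v c).trans (by rw [hI])
  have hEX : E X = v := @implicitDeriv_X _ _ I v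
  let p : ℚ[X][X] := C X * (X + 1)
  let m : ℚ[X][X] := X - 1
  let κ : ℚ[X][X] := 4 * C X ^ 3 + 1 + X
  have hkey := airy_key T n hT1 hT2
    E p m κ
    (by
      intro c
      simp only [airyIota, hEC, derivative_expand]
      simp [hC2]; ring)
    (by
      have h1 : E 1 = 0 := by simp
      simp only [p, m, κ, Derivation.leibniz, hEC, map_add, hEX, v, smul_eq_mul, h1]
      simp [hC2]; ring)
    (by
      have h1 : E 1 = 0 := by simp
      simp only [p, m, κ, map_sub, hEX, v, h1]
      ring) f hn.ge
  set G := airyHom p m n f with hG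
  have hm0 : m ≠ 0 := by
    simpa [m] using X_sub_C_ne_zero (1 : ℚ[X])
  have hEG : E G = ((n : ℚ[X][X]) * κ + 4 * C X ^ 2 * airyIota μ) * G := by
    apply mul_left_cancel₀ hm0
    rw [hkey]
    rw [hTf, airyHom_C_mul,
      airyHom_succ _ _ _ _ hn.ge]
    ring
  -- coefficientwise
  let g : ℕ → ℚ[X] := fun a => G.coeff a
  let gp : ℕ → ℚ[X] := fun a => (X * G).coeff a
  have hgp : ∀ a, gp (a + 1) = g a := fun a => by simp [gp, g]
  have hgp0 : gp 0 = 0 := by simp [gp]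
  have hmul : ∀ a : ℕ, (X * derivative G).coeff a = (a : ℚ[X]) * g a := by
    intro a
    rcases a with _ | a
    · simp
    · simp [g, coeff_derivative]; ring
  have hmul2 : ∀ a : ℕ, (X * (X * derivative G)).coeff a = ((a : ℚ[X]) - 1) * gp a := by
    intro a
    rcases a with _ | a
    · simp [hgp0]
    · rw [coeff_X_mul, hmul, hgp]; simp
  have hco : ∀ a : ℕ, (4 * X ^ 2 * expand ℚ 2 μ - 4 * X ^ 3 * (2 * (a : ℚ[X]) - (n : ℚ[X]))) * g a
      = 2 * (X * derivative (g a)) - ((a : ℚ[X]) + 1) * g (a + 1) + ((a : ℚ[X]) - 1 - (n : ℚ[X])) * gp a - (n : ℚ[X]) * g a := by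
    intro a
    have h1 : E G = @mapCoeffs _ _ I G + (C (8 * X ^ 3) * (X * derivative G) - derivative G
        + X * (X * derivative G)) := by
      have : E G = @mapCoeffs _ _ I G + v * derivative G := rfl
      rw [this]; simp [v, hC8]; ring
    have h2 : ((n : ℚ[X][X]) * κ + 4 * C X ^ 2 * airyIota μ) * G = C ((n : ℚ[X]) * (4 * X ^ 3 + 1)
        + 4 * X ^ 2 * expand ℚ 2 μ) * G + C (n : ℚ[X]) * (X * G) := by
      simp [κ, airyIota, hC4]; ring
    have h3 := congrArg (fun q => q.coeff a) (h1.symm.trans (hEG.trans h2))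
    simp only [coeff_add, coeff_sub, coeff_C_mul, hmul, hmul2, coeff_derivative] at h3
    have h4 : (@mapCoeffs _ _ I G).coeff a = 2 * X * derivative (g a) := rfl
    rw [h4] at h3
    change 2 * X * derivative (g a) + (8 * X ^ 3 * ((a : ℚ[X]) * g a) - g (a+1) * ((a : ℚ[X]) + 1) + ((a : ℚ[X]) - 1) * gp a)
      = ((n : ℚ[X]) * (4 * X ^ 3 + 1) + 4 * X ^ 2 * expand ℚ 2 μ) * g a + (n : ℚ[X]) * gp a at h3
    linear_combination -h3
  -- value at 1
  have hev : G.eval 1 = expand ℚ 2 f.leadingCoeff * (2 * X) ^ n := by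
    rw [hG, airyHom, eval_finsetSum, Finset.sum_eq_single n]
    · simp [airyIota, p, m, hn]; left; ring
    · intro b hb hbn
      rw [Finset.mem_range] at hb
      have : n - b ≠ 0 := by omega
      simp [m, this]
    · simp
  have hlc : expand ℚ 2 f.leadingCoeff ≠ 0 := by
    rw [Ne, expand_eq_zero (by norm_num)]; simpa using hf
  have h2X : (2 * X : ℚ[X]) = C 2 * X := by rw [hc2]
  have hevd : n ≤ (G.eval 1).natDegree := by
    rw [hev, natDegree_mul hlc (by simp), natDegree_pow, h2X, natDegree_C_mul_X _ (by norm_num)]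
    omega
  have hG0 : G ≠ 0 := by
    intro h
    rw [h, eval_zero] at hev
    have : (expand ℚ 2 f.leadingCoeff * (2 * X) ^ n) ≠ 0 := mul_ne_zero hlc (by simp)
    exact this hev.symm
  obtain ⟨a, ha, hmax⟩ := Finset.exists_max_image G.support (fun b => (g b).natDegree)
    (by simpa using hG0)
  have hga : g a ≠ 0 := by simpa using ha
  set M := (g a).natDegree with hM
  have hmax' : ∀ b, (g b).natDegree ≤ M := by
    intro b
    by_cases hb : g b = 0
    · simp [hb]
    · exact hmax b (by simpa using hb)
  have hmaxp : ∀ b, (gp b).natDegree ≤ M := by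
    intro b
    rcases b with _ | b
    · simp [hgp0]
    · rw [hgp]; exact hmax' b
  have hnM : n ≤ M := by
    refine hevd.trans ?_
    rw [eval_eq_sum_range]
    refine natDegree_sum_le_of_forall_le _ _ fun b _ => ?_
    simpa using hmax' b
  have hXd : ∀ q : ℚ[X], ∀ i : ℕ, (X * derivative q).coeff i = (i : ℚ) * q.coeff i := by
    intro q i
    rcases i with _ | i
    · simp
    · simp [coeff_derivative]; ring
  have hnat : ∀ b : ℕ, (b : ℚ[X]) = C (b : ℚ) := fun b => by simp
  have hrhs : ∀ b, ∀ N, M < N → (2 * (X * derivative (g b)) - ((b : ℚ[X]) + 1) * g (b + 1)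
      + ((b : ℚ[X]) - 1 - (n : ℚ[X])) * gp b - (n : ℚ[X]) * g b).coeff N = 0 := by
    intro b N hN
    have e1 : (g b).coeff N = 0 := coeff_eq_zero_of_natDegree_lt ((hmax' b).trans_lt hN)
    have e2 : (g (b+1)).coeff N = 0 := coeff_eq_zero_of_natDegree_lt ((hmax' _).trans_lt hN)
    have e3 : (gp b).coeff N = 0 := coeff_eq_zero_of_natDegree_lt ((hmaxp b).trans_lt hN)
    have : (2 * (X * derivative (g b)) - ((b : ℚ[X]) + 1) * g (b + 1)
      + ((b : ℚ[X]) - 1 - (n : ℚ[X])) * gp b - (n : ℚ[X]) * g b) = C 2 * (X * derivative (g b)) - C ((b:ℚ) + 1) * g (b + 1)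
      + C ((b:ℚ) - 1 - n) * gp b - C (n : ℚ) * g b := by simp [hc2]
    rw [this]
    simp only [coeff_add, coeff_sub, coeff_C_mul, hXd, e1, e2, e3]; ring
  -- any index of top degree is the middle one
  have hmid : ∀ b, (g b).coeff M ≠ 0 → 2 * b = n ∧ μ = 0 := by
    intro b hb
    have hb0 : g b ≠ 0 := by rintro h; simp [h] at hb
    have hbM : (g b).natDegree = M := le_antisymm (hmax' b) (le_natDegree_of_ne_zero hb)
    obtain ⟨q, hq⟩ : ∃ q : ℚ[X], q = 4 * X ^ 2 * expand ℚ 2 μ - 4 * X ^ 3 * (2 * (b : ℚ[X]) - (n : ℚ[X])) := ⟨_, rfl⟩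
    have hqd : q.natDegree = 0 := by
      by_contra hne
      have hq0 : q ≠ 0 := by rintro h; simp [h] at hne
      have h1 := natDegree_mul hq0 hb0
      have h2 := hrhs b (q * g b).natDegree (by omega)
      rw [← hco b, ← hq] at h2
      exact mul_ne_zero hq0 hb0 (leadingCoeff_eq_zero.1 h2)
    have hq' : q = C 4 * (expand ℚ 2 μ * X ^ 2) - C (4 * (2 * (b : ℚ) - n)) * X ^ 3 := by
      rw [hq]; simp [hc2, hc4]; ring
    have h3 : q.coeff 3 = 0 := coeff_eq_zero_of_natDegree_lt (by omega)
    have hbn : 2 * (b : ℚ) - n = 0 := by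
      rw [hq', coeff_sub, coeff_C_mul, coeff_C_mul, coeff_mul_X_pow', coeff_X_pow,
        coeff_expand (by norm_num)] at h3
      norm_num at h3
      exact h3
    refine ⟨by exact_mod_cast (sub_eq_zero.1 hbn), ?_⟩
    by_contra hμ
    rw [hbn] at hq'
    have hμ' : expand ℚ 2 μ ≠ 0 := by rwa [Ne, expand_eq_zero (by norm_num)]
    rw [hq', mul_zero, C_0, zero_mul, sub_zero, natDegree_C_mul (by norm_num),
      natDegree_mul hμ' (by simp), natDegree_X_pow] at hqd
    omega
  have hlcM : (g a).coeff M ≠ 0 := by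
    rw [hM]; simpa using hga
  obtain ⟨h2a, hμ⟩ := hmid a hlcM
  have hs1 : (g (a+1)).coeff M = 0 := by
    by_contra h
    have := (hmid _ h).1; omega
  have hs2 : (gp a).coeff M = 0 := by
    rcases a with _ | a
    · simp [hgp0]
    · rw [hgp]
      by_contra h
      have := (hmid _ h).1; omega
  have hfin := congrArg (fun q => q.coeff M) (hco a)
  have : (2 * (X * derivative (g a)) - ((a : ℚ[X]) + 1) * g (a + 1)
      + ((a : ℚ[X]) - 1 - (n : ℚ[X])) * gp a - (n : ℚ[X]) * g a) = C 2 * (X * derivative (g a)) - C ((a:ℚ) + 1) * g (a + 1)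
      + C ((a:ℚ) - 1 - n) * gp a - C (n : ℚ) * g a := by simp [hc2]
  rw [this] at hfin
  have hz : (2 * (a : ℚ[X]) - n) = 0 := by
    rw [← h2a]; push_cast; ring
  rw [hz, hμ] at hfin
  simp only [coeff_add, coeff_sub, coeff_C_mul, hXd, hs1, hs2, map_zero, mul_zero, sub_zero, zero_mul,
    coeff_zero, add_zero] at hfin
  have h5 : (2 * (M : ℚ) - n) * (g a).coeff M = 0 := by linear_combination -hfin
  have h6 : 2 * (M : ℚ) - n = 0 := (mul_eq_zero.1 h5).resolve_right hlcM
  have h7 : 2 * M = n := by exact_mod_cast sub_eq_zero.1 h6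
  omega

lemma ratfunc_deriv {k : Type*} [Field k] [CharZero k] [Algebra ℚ[X] k] [Differential k]
    (hX : (algebraMap ℚ[X] k X)′ = 1) (p : ℚ[X]) :
    (algebraMap ℚ[X] k p)′ = algebraMap ℚ[X] k (derivative p) := by
  induction p using Polynomial.induction_on' with
  | add p q hp hq => simp [hp, hq]
  | monomial n a =>
    have hC : ∀ a : ℚ, algebraMap ℚ[X] k (C a) = (a : k) := fun a =>
      eq_ratCast ((algebraMap ℚ[X] k).comp C) a
    have hC' : ∀ a : ℚ, (a : k)′ = 0 := by
      intro a
      have h1 : (a : k) = a • (1 : k) := by rw [Rat.smul_one_eq_cast]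
      have h2 : (Differential.deriv : Derivation ℤ k k) (a • (1 : k)) = a • ((1 : k)′) :=
        map_rat_smul (Differential.deriv : Derivation ℤ k k) a (1 : k)
      rw [h1, h2]; simp
    rw [derivative_monomial, ← C_mul_X_pow_eq_monomial, ← C_mul_X_pow_eq_monomial,
      map_mul (algebraMap ℚ[X] k), map_mul (algebraMap ℚ[X] k),
      map_pow (algebraMap ℚ[X] k), map_pow (algebraMap ℚ[X] k), hC, hC, Derivation.leibniz, hC', Derivation.leibniz_pow, hX]
    simp
    ring

lemma implicitDeriv_eq {A : Type*} [CommRing A] [Differential A] (v p : A[X]) :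
    implicitDeriv v p = mapCoeffs p + v * derivative p := rfl

lemma darboux {k : Type*} [Field k] [CharZero k] [Algebra ℚ[X] k] [IsFractionRing ℚ[X] k]
    [Differential k] (hX : (algebraMap ℚ[X] k X)′ = 1) (P : k[X])
    (hP : P ≠ 0) (hdvd : P ∣ implicitDeriv (C (algebraMap ℚ[X] k X) - X ^ 2) P) : P.natDegree = 0 := by
  classical
  let I : Differential ℚ[X] := ⟨(Polynomial.derivative' (R := ℚ)).restrictScalars ℤ⟩
  have hd : ∀ p : ℚ[X], p′ = derivative p := fun p => rfl
  let : NormalizedGCDMonoid ℚ[X] := Classical.choice inferInstance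
  obtain ⟨b, hbm, hb⟩ := IsLocalization.integerNormalization_spec (nonZeroDivisors ℚ[X]) P
  set F := IsLocalization.integerNormalization (nonZeroDivisors ℚ[X]) P with hF
  set f := F.primPart with hf
  have hb0 : algebraMap ℚ[X] k b ≠ 0 := by
    simpa using nonZeroDivisors.ne_zero hbm
  have hb' : F.map (algebraMap ℚ[X] k) = C (algebraMap ℚ[X] k b) * P := by
    rw [hb, ← algebraMap_smul k, smul_eq_C_mul]
  have hF0 : F ≠ 0 := by
    intro h
    rw [h] at hb'
    simp [hb0, hP] at hb'
  have hc0 : F.content ≠ 0 := by simpa [content_eq_zero_iff] using hF0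
  have hc0' : algebraMap ℚ[X] k F.content ≠ 0 := by simpa using hc0
  have hFf : F.map (algebraMap ℚ[X] k) = C (algebraMap ℚ[X] k F.content) *
      f.map (algebraMap ℚ[X] k) := by
    conv_lhs => rw [F.eq_C_content_mul_primPart]
    simp [hf]
  have hfP : ∃ c : k, c ≠ 0 ∧ f.map (algebraMap ℚ[X] k) = C c * P := by
    refine ⟨(algebraMap ℚ[X] k F.content)⁻¹ * algebraMap ℚ[X] k b, by simp [hb0, hc0], ?_⟩
    rw [C_mul, mul_assoc, ← hb', hFf, ← mul_assoc, ← C_mul, inv_mul_cancel₀ hc0']; simp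
  obtain ⟨c, hc, hfc⟩ := hfP
  have hdeg : f.natDegree = P.natDegree := by
    have := congrArg natDegree hfc
    rwa [natDegree_map_eq_of_injective (IsFractionRing.injective ℚ[X] k), natDegree_C_mul hc] at this
  have hf0 : f ≠ 0 := by
    intro h; rw [h] at hfc; simp [hc, hP] at hfc
  have hmapD : implicitDeriv (C (algebraMap ℚ[X] k X) - X ^ 2) (f.map (algebraMap ℚ[X] k))
      = (implicitDeriv (C X - X ^ 2) f).map (algebraMap ℚ[X] k) := by
    simp only [implicitDeriv_eq, Polynomial.map_add, Polynomial.map_mul, Polynomial.map_sub,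
      Polynomial.map_pow, map_C, map_X, derivative_map]
    congr 1
    ext i
    rw [coeff_mapCoeffs, coeff_map, coeff_map, ratfunc_deriv hX]
    rfl
  have hdvd1 : f.map (algebraMap ℚ[X] k) ∣
      (implicitDeriv (C X - X ^ 2) f).map (algebraMap ℚ[X] k) := by
    rw [← hmapD, hfc, Derivation.leibniz, implicitDeriv_C]
    refine dvd_add ?_ ?_
    · rw [smul_eq_mul]
      exact mul_dvd_mul_left _ hdvd
    · rw [smul_eq_mul]
      refine Dvd.intro (C c⁻¹ * C c′) ?_
      have : C c * C c⁻¹ = (1 : k[X]) := by rw [← C_mul, mul_inv_cancel₀ hc]; simp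
      linear_combination (P * C c′) * this
  have hdvd2 := IsPrimitive.dvd_of_fraction_map_dvd_fraction_map F.isPrimitive_primPart hdvd1
  obtain ⟨g, hg⟩ := hdvd2
  rw [← hdeg]
  set n := f.natDegree with hn
  rw [← hf] at hg
  have hcoef : ∀ m, (implicitDeriv (C X - X ^ 2) f).coeff (m + 2) =
     (f.coeff (m+2))′ + X * (f.coeff (m + 3) * ((m:ℚ[X]) + 2 + 1)) - f.coeff (m + 1) * ((m:ℚ[X]) + 1) := by
    intro m
    rw [implicitDeriv_eq, coeff_add, sub_mul, coeff_sub, coeff_C_mul, coeff_derivative, coeff_mapCoeffs,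
     coeff_X_pow_mul, coeff_derivative]
    push_cast; ring
  rcases Nat.eq_zero_or_pos n with h0 | hpos
  · exact h0
  have hgd : g.natDegree ≤ 1 := by
    by_contra hgd
    push Not at hgd
    have hg0 : g ≠ 0 := by rintro rfl; simp at hgd
    have h1 : (f * g).natDegree = n + g.natDegree := natDegree_mul hf0 hg0
    obtain ⟨e, he⟩ : ∃ e, g.natDegree = e + 2 := ⟨_, (Nat.sub_add_cancel hgd).symm⟩
    have h2 : (f * g).coeff ((n + e) + 2) ≠ 0 := by
      have : (n + e) + 2 = (f * g).natDegree := by omega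
      rw [this, coeff_natDegree]
      simp [hf0, hg0]
    apply h2
    rw [← hg, hcoef, coeff_eq_zero_of_natDegree_lt (n := n + e + 2) (by omega), coeff_eq_zero_of_natDegree_lt (n := n + e + 3) (by omega),
     coeff_eq_zero_of_natDegree_lt (n := n + e + 1) (by omega)]
    simp
  have hg1 : f.leadingCoeff * g.coeff 1 = - f.leadingCoeff * (n : ℚ[X]) := by
    have h1 : (f * g).coeff (n + 1) = f.coeff n * g.coeff 1 :=
      coeff_mul_add_eq_of_natDegree_le le_rfl hgd
    obtain ⟨m, hm⟩ : ∃ m, n = m + 1 := ⟨n - 1, by omega⟩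
    rw [← hg, hm, hcoef, coeff_eq_zero_of_natDegree_lt (n := m + 2) (by omega), coeff_eq_zero_of_natDegree_lt (n := m + 3) (by omega), ← hm] at h1
    rw [leadingCoeff, ← hn, ← h1, hm]
    simp
  have hg1' : g.coeff 1 = -(n : ℚ[X]) := by
    have : f.leadingCoeff ≠ 0 := by simpa using hf0
    apply mul_left_cancel₀ this
    rw [hg1]; ring
  have hgeq : g = C (g.coeff 0) - (n : ℚ[X][X]) * X := by
    have := eq_X_add_C_of_natDegree_le_one hgd
    rw [hg1'] at this
    conv_lhs => rw [this]
    simp; ring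
  refine airy_core hd f hf0 (g.coeff 0) ?_
  rw [← hn, hg, ← hgeq, mul_comm]

section diffalg

variable {K L : Type*} [Field K] [Field L] [Algebra K L] [Differential K] [Differential L]
  [DifferentialAlgebra K L]

lemma minpoly_dvd_implicitDeriv (x : L) (v : K[X]) (hx : x′ = aeval x v) :
    minpoly K x ∣ implicitDeriv v (minpoly K x) := by
  apply minpoly.dvd
  rw [← deriv_aeval_eq_implicitDeriv x v hx, minpoly.aeval]
  simp

lemma deriv_frac (x : L) (v : K[X]) (hx : x′ = aeval x v) (g : L) (P Q : K[X])
    (hg : g * aeval x Q = aeval x P) :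
    g′ * (aeval x Q) ^ 2 + aeval x P * aeval x (implicitDeriv v Q)
      = aeval x (implicitDeriv v P) * aeval x Q := by
  have h1 := congrArg (fun y : L => y′) hg
  simp only [Derivation.leibniz, smul_eq_mul, deriv_aeval_eq_implicitDeriv x v hx] at h1
  rw [← h1, ← hg]; ring

lemma exists_coprime (x g : L) (hg : g ∈ IntermediateField.adjoin K {x}) :
    ∃ P Q : K[X], IsCoprime P Q ∧ Q.Monic ∧ aeval x Q ≠ 0 ∧ g * aeval x Q = aeval x P := by
  rw [IntermediateField.mem_adjoin_simple_iff] at hg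
  obtain ⟨P, Q, rfl⟩ := hg
  by_cases hQ : aeval x Q = 0
  · exact ⟨0, 1, isCoprime_one_right, monic_one, by simp, by simp [hQ]⟩
  have hQ0 : Q ≠ 0 := by rintro rfl; simp at hQ
  classical
  let I : GCDMonoid K[X] := EuclideanDomain.gcdMonoid K[X]
  have hco := isCoprime_div_gcd_div_gcd (p := P) hQ0
  set G := GCDMonoid.gcd P Q
  have hG0 : G ≠ 0 := by
    exact gcd_ne_zero_of_right hQ0
  have hP1 : G * (P / G) = P := EuclideanDomain.mul_div_cancel' hG0 (GCDMonoid.gcd_dvd_left P Q)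
  have hQ1 : G * (Q / G) = Q := EuclideanDomain.mul_div_cancel' hG0 (GCDMonoid.gcd_dvd_right P Q)
  set P1 := P / G
  set Q1 := Q / G
  have hQ10 : Q1 ≠ 0 := by intro h; rw [h] at hQ1; simp at hQ1; exact hQ0 hQ1.symm
  have hl : Q1.leadingCoeff⁻¹ ≠ 0 := by simpa using hQ10
  have hu : IsUnit (C Q1.leadingCoeff⁻¹) := isUnit_C.2 hl.isUnit
  rw [← hQ1, map_mul] at hQ
  have hQx := right_ne_zero_of_mul hQ
  have hGx := left_ne_zero_of_mul hQ
  refine ⟨P1 * C Q1.leadingCoeff⁻¹, Q1 * C Q1.leadingCoeff⁻¹, ?_, monic_mul_leadingCoeff_inv hQ10, ?_, ?_⟩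
  · exact (isCoprime_mul_unit_right_left hu _ _).2 ((isCoprime_mul_unit_right_right hu _ _).2 hco)
  · rw [map_mul, aeval_C]
    refine mul_ne_zero hQx ?_
    simpa using hQ10
  · rw [← hQ1, ← hP1]
    simp only [map_mul]
    field_simp

lemma adjoin_closed (x : L) (v : K[X]) (hx : x′ = aeval x v) (g : L)
    (hg : g ∈ IntermediateField.adjoin K {x}) : g′ ∈ IntermediateField.adjoin K {x} := by
  obtain ⟨P, Q, -, -, hQ, h⟩ := exists_coprime x g hg
  have h1 := deriv_frac x v hx g P Q h
  rw [IntermediateField.mem_adjoin_simple_iff]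
  refine ⟨implicitDeriv v P * Q - P * implicitDeriv v Q, Q ^ 2, ?_⟩
  rw [eq_div_iff (by simpa using hQ)]
  simp only [map_sub, map_mul, map_pow]
  linear_combination h1

/-- restriction of a derivation to a stable intermediate field -/
@[reducible] def restrictDiff (M : IntermediateField K L) (hM : ∀ g ∈ M, g′ ∈ M) :
    Differential M where
  deriv := Derivation.mk'
    { toFun := fun x => ⟨(x : L)′, hM _ x.2⟩
      map_add' := by intro x y; ext; simp
      map_smul' := by intro m x; ext; simp }
    (by intro a b; ext; simp)

lemma monic_dvd_scale (a : K) (m : K[X]) (hm : m.Monic) (h : m ∣ implicitDeriv (C a * X) m) (i : ℕ) :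
    (m.coeff i)′ = ((m.natDegree : K) - i) * a * m.coeff i := by
  set n := m.natDegree with hn
  have hcoef : ∀ i, (implicitDeriv (C a * X) m).coeff i = (m.coeff i)′ + i * a * m.coeff i := by
    intro i
    rw [implicitDeriv_eq, coeff_add, coeff_mapCoeffs, mul_assoc, coeff_C_mul]
    rcases i with _ | i
    · simp
    · rw [coeff_X_mul, coeff_derivative]; push_cast; ring
  have hz : implicitDeriv (C a * X) m - C (n * a) * m = 0 := by
    apply eq_zero_of_dvd_of_degree_lt (p := m) (dvd_sub h (dvd_mul_left _ _))
    rw [degree_eq_natDegree hm.ne_zero, degree_lt_iff_coeff_zero]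
    intro j hj
    rw [coeff_sub, hcoef, coeff_C_mul]
    rcases hj.eq_or_lt with rfl | hj
    · rw [← hn, hn, hm.coeff_natDegree]; simp
    · rw [coeff_eq_zero_of_natDegree_lt (by omega)]; simp
  have := congrArg (fun p => p.coeff i) hz
  simp only [coeff_sub, hcoef, coeff_C_mul, coeff_zero] at this
  linear_combination this

lemma alg_exp [CharZero K] (h : L) (h0 : h ≠ 0) (a : K) (hh : h′ = algebraMap K L a * h)
    (hA : ∀ i : ℤ, i ≠ 0 → ∀ g : K, g′ = i * a * g → g = 0) : Transcendental K h := by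
  intro halg
  have hint : IsIntegral K h := halg.isIntegral
  have hd := minpoly_dvd_implicitDeriv h (C a * X) (by simp [hh])
  have h1 := monic_dvd_scale a _ (minpoly.monic hint) hd 0
  have hn := minpoly.natDegree_pos hint
  refine minpoly.coeff_zero_ne_zero hint h0 (hA ((minpoly K h).natDegree : ℤ) (by omega) _ ?_)
  rw [h1]; push_cast; ring

lemma alg_prim [CharZero K] (h : K) (q : L) (hq : q′ = algebraMap K L h) (hA : ∀ g : K, g′ ≠ h) :
    Transcendental K q := by
  intro halg
  have hint : IsIntegral K q := halg.isIntegral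
  have hd := minpoly_dvd_implicitDeriv q (C h) (by simp [hq])
  have hm := minpoly.monic hint
  have hn := minpoly.natDegree_pos hint
  set m := minpoly K q
  have hcoef : ∀ i : ℕ, (implicitDeriv (C h) m).coeff i = (m.coeff i)′ + h * (m.coeff (i+1) * ((i : K) + 1)) := by
    intro i
    rw [implicitDeriv_eq, coeff_add, coeff_mapCoeffs, coeff_C_mul, coeff_derivative]
  have hz : implicitDeriv (C h) m = 0 := by
    apply eq_zero_of_dvd_of_degree_lt (p := m) hd
    rw [degree_eq_natDegree hm.ne_zero, degree_lt_iff_coeff_zero]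
    intro j hj
    rw [hcoef, coeff_eq_zero_of_natDegree_lt (n := j + 1) (by omega)]
    rcases hj.eq_or_lt with rfl | hj
    · rw [hm.coeff_natDegree]; simp
    · rw [coeff_eq_zero_of_natDegree_lt (by omega)]; simp
  obtain ⟨j, hj⟩ : ∃ j, m.natDegree = j + 1 := ⟨m.natDegree - 1, by omega⟩
  have h1 := hcoef j
  rw [hz, ← hj, hm.coeff_natDegree, coeff_zero] at h1
  have hj0 : ((j : K) + 1) ≠ 0 := by exact_mod_cast Nat.succ_ne_zero j
  have hq0 : (((-((j : ℚ) + 1)⁻¹ : ℚ)) : K) = - ((j : K) + 1)⁻¹ := by push_cast; ring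
  apply hA ((-((j : ℚ) + 1)⁻¹ : ℚ) • m.coeff j)
  have h2 : ((-((j : ℚ) + 1)⁻¹ : ℚ) • m.coeff j)′ = (-((j : ℚ) + 1)⁻¹ : ℚ) • (m.coeff j)′ :=
    map_rat_smul (Differential.deriv : Derivation ℤ K K) _ _
  rw [h2, Rat.smul_def, hq0]
  field_simp
  linear_combination h1

lemma no_prim (h : L) (htr : Transcendental K h) (a : K) (hh : h′ = algebraMap K L a * h)
    (hA : ∀ i : ℤ, i ≠ 0 → ∀ g : K, g′ = i * a * g → g = 0) (hB : ∀ g : K, g′ ≠ -a * g + 1)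
    (g : L) (hg : g ∈ IntermediateField.adjoin K {h}) : g′ ≠ h := by
  intro hgh
  obtain ⟨P, Q, hco, hmon, hQ, hgPQ⟩ := exists_coprime h g hg
  have h1 := deriv_frac h (C a * X) (by simp [hh]) g P Q hgPQ
  rw [hgh] at h1
  have hinj := transcendental_iff_injective.1 htr
  have h2 : X * Q ^ 2 + P * implicitDeriv (C a * X) Q = implicitDeriv (C a * X) P * Q := by
    apply hinj; simpa using h1
  have hd : Q ∣ implicitDeriv (C a * X) Q := by
    have : Q ∣ P * implicitDeriv (C a * X) Q := by
      refine ⟨implicitDeriv (C a * X) P - X * Q, ?_⟩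
      linear_combination h2
    exact hco.symm.dvd_of_dvd_mul_left this
  have hQi := monic_dvd_scale a Q hmon hd
  set N := Q.natDegree with hN
  have hQX : Q = X ^ N := by
    ext i
    rw [coeff_X_pow]
    split_ifs with hi
    · rw [hi]; exact hmon.coeff_natDegree
    · refine hA ((N : ℤ) - i) (by omega) _ ?_
      rw [hQi]; push_cast; ring
  have hDQ : implicitDeriv (C a * X) Q = C (N * a) * Q := by
    ext i
    have h3 := hQi i
    rw [implicitDeriv_eq, coeff_add, coeff_mapCoeffs, mul_assoc, coeff_C_mul, coeff_C_mul, h3]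
    rcases i with _ | i
    · simp
    · rw [coeff_X_mul, coeff_derivative]; push_cast; ring
  have h4 : X * Q + P * C (N * a) = implicitDeriv (C a * X) P := by
    apply mul_right_cancel₀ hmon.ne_zero
    rw [← h2, hDQ]; ring
  apply hB (P.coeff (N + 1))
  have h5 := congrArg (fun p => p.coeff (N + 1)) h4
  simp only [coeff_add, coeff_mul_C, implicitDeriv_eq, coeff_mapCoeffs, mul_assoc, coeff_C_mul, coeff_X_mul, coeff_derivative] at h5
  rw [hN, hmon.coeff_natDegree] at h5
  linear_combination -h5

end diffalg

section airy

variable {k L : Type*} [Field k] [CharZero k] [Algebra ℚ[X] k] [IsFractionRing ℚ[X] k]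
    [Differential k] [Field L] [Algebra k L] [Differential L] [DifferentialAlgebra k L]

lemma airy_trans (hX : (algebraMap ℚ[X] k X)′ = 1) (r : L)
    (hr : r′ = algebraMap k L (algebraMap ℚ[X] k X) - r ^ 2) : Transcendental k r := by
  intro halg
  have hint : IsIntegral k r := halg.isIntegral
  have hd := minpoly_dvd_implicitDeriv r (C (algebraMap ℚ[X] k X) - X ^ 2) (by simp [hr])
  have := darboux hX _ (minpoly.ne_zero hint) hd
  have := minpoly.natDegree_pos hint
  omega

lemma airy_A (hX : (algebraMap ℚ[X] k X)′ = 1) (r : L)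
    (hr : r′ = algebraMap k L (algebraMap ℚ[X] k X) - r ^ 2) (g : L)
    (hg : g ∈ IntermediateField.adjoin k {r}) (i : k) (hi : i ≠ 0)
    (h : g′ = algebraMap k L i * r * g) : g = 0 := by
  obtain ⟨P, Q, hco, hmon, hQ, hgPQ⟩ := exists_coprime r g hg
  set v := (C (algebraMap ℚ[X] k X) - X ^ 2) with hv
  have h1 := deriv_frac r v (by simp [hr, hv]) g P Q hgPQ
  have hinj := transcendental_iff_injective.1 (airy_trans hX r hr)
  have h2 : C i * X * P * Q + P * implicitDeriv v Q = implicitDeriv v P * Q := by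
    apply hinj
    simp only [map_add, map_mul, aeval_C, aeval_X]
    rw [← h1, h, ← hgPQ]; ring
  by_contra hg0
  have hP0 : P ≠ 0 := by
    rintro rfl
    simp [hg0, hQ] at hgPQ
  have hdQ : Q ∣ implicitDeriv v Q := by
    have : Q ∣ P * implicitDeriv v Q := by
      refine ⟨implicitDeriv v P - C i * X * P, ?_⟩
      linear_combination h2
    exact hco.symm.dvd_of_dvd_mul_left this
  have hdP : P ∣ implicitDeriv v P := by
    have : P ∣ implicitDeriv v P * Q := by
      refine ⟨implicitDeriv v Q + C i * X * Q, ?_⟩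
      linear_combination -h2
    exact hco.dvd_of_dvd_mul_right this
  have hQ1 : Q = 1 := hmon.natDegree_eq_zero.1 (darboux hX Q hmon.ne_zero hdQ)
  have hPC := eq_C_of_natDegree_eq_zero (darboux hX P hP0 hdP)
  set p := P.coeff 0
  rw [hQ1, hPC] at h2
  have h3 := congrArg (fun p => p.coeff 1) h2
  have hp0 : p ≠ 0 := by intro h; rw [h] at hPC; simp at hPC; exact hP0 hPC
  simp [implicitDeriv_C, coeff_C, mul_assoc, hi, hp0] at h3

lemma airy_B (hX : (algebraMap ℚ[X] k X)′ = 1) (r : L)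
    (hr : r′ = algebraMap k L (algebraMap ℚ[X] k X) - r ^ 2) (g : L)
    (hg : g ∈ IntermediateField.adjoin k {r}) : g′ ≠ 2 * r * g + 1 := by
  intro h
  obtain ⟨P, Q, hco, hmon, hQ, hgPQ⟩ := exists_coprime r g hg
  set v := (C (algebraMap ℚ[X] k X) - X ^ 2) with hv
  have h1 := deriv_frac r v (by simp [hr, hv]) g P Q hgPQ
  have hinj := transcendental_iff_injective.1 (airy_trans hX r hr)
  have h2 : C 2 * X * P * Q + Q ^ 2 + P * implicitDeriv v Q = implicitDeriv v P * Q := by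
    apply hinj
    simp only [map_add, map_mul, map_pow, aeval_X, map_ofNat]
    rw [← h1, h, ← hgPQ]; ring
  have hdQ : Q ∣ implicitDeriv v Q := by
    have : Q ∣ P * implicitDeriv v Q := by
      refine ⟨implicitDeriv v P - C 2 * X * P - Q, ?_⟩
      linear_combination h2
    exact hco.symm.dvd_of_dvd_mul_left this
  have hQ1 : Q = 1 := hmon.natDegree_eq_zero.1 (darboux hX Q hmon.ne_zero hdQ)
  rw [hQ1] at h2
  have hP0 : P ≠ 0 := by
    rintro rfl
    simp at h2
  have h3 := congrArg (fun p => p.coeff (P.natDegree + 1)) h2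
  have h4 : (implicitDeriv v P).coeff (P.natDegree + 1) = - (P.natDegree : k) * P.leadingCoeff := by
    rw [implicitDeriv_eq, hv, sub_mul, coeff_add, coeff_mapCoeffs, coeff_sub, coeff_C_mul, coeff_derivative,
      coeff_eq_zero_of_natDegree_lt (n := P.natDegree + 1) (by omega),
      coeff_eq_zero_of_natDegree_lt (n := P.natDegree + 1 + 1) (by omega)]
    rcases hn : P.natDegree with _ | n
    · rw [coeff_X_pow_mul']; simp
    · rw [show n + 1 + 1 = n + 2 from rfl, coeff_X_pow_mul, coeff_derivative, leadingCoeff, hn]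
      simp; ring
  simp only [mul_one, one_pow, coeff_add, h4, mul_assoc, coeff_C_mul, coeff_X_mul, coeff_natDegree,
    coeff_one] at h3
  have h5 : ((2 + P.natDegree : ℕ) : k) * P.leadingCoeff = 0 := by
    simp at h3
    push_cast
    linear_combination h3
  rw [mul_eq_zero, Nat.cast_eq_zero, leadingCoeff_eq_zero] at h5
  rcases h5 with h5 | h5
  · omega
  · exact hP0 h5

end airy

section final

variable {k L : Type*} [Field k] [CharZero k] [Algebra ℚ[X] k] [IsFractionRing ℚ[X] k]
    [Differential k] [Field L] [Algebra k L] [Differential L] [DifferentialAlgebra k L]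

lemma airy_trdeg (hX : (algebraMap ℚ[X] k X)′ = 1) (r h q : L)
    (hr : r′ = algebraMap k L (algebraMap ℚ[X] k X) - r ^ 2)
    (h0 : h ≠ 0) (hh : h′ = -2 * r * h) (hq : q′ = h) :
    ∃ f : Fin 3 → L, AlgebraicIndependent k f := by
  have htr := airy_trans hX r hr
  set K := IntermediateField.adjoin k {r} with hK
  have hrK : r ∈ K := IntermediateField.mem_adjoin_simple_self k r
  let I1 : Differential K := restrictDiff K
    (adjoin_closed r (C (algebraMap ℚ[X] k X) - X ^ 2) (by simp [hr]))
  have I1' : DifferentialAlgebra K L := ⟨fun a => rfl⟩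
  set a : K := -2 * ⟨r, hrK⟩ with ha
  have ha' : algebraMap K L a = -2 * r := rfl
  have hA : ∀ i : ℤ, i ≠ 0 → ∀ g : K, g′ = i * a * g → g = 0 := by
    intro i hi g hg
    have h1 : (g : L)′ = i * (-2 * r) * g := congrArg (fun x : K => (x : L)) hg
    have : (g : L) = 0 := by
      refine airy_A hX r hr g g.2 (-2 * i : k) (by simpa using hi) ?_
      rw [h1]; simp only [map_mul, map_neg, map_ofNat, map_intCast]; ring
    exact_mod_cast this
  have hB : ∀ g : K, g′ ≠ -a * g + 1 := by
    intro g hg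
    have h1 : (g : L)′ = -(-2 * r) * g + 1 := congrArg (fun x : K => (x : L)) hg
    refine airy_B hX r hr g g.2 ?_
    rw [h1]; ring
  have hh' : h′ = algebraMap K L a * h := by rw [hh, ha']
  have htr2 : Transcendental K h := alg_exp h h0 a hh' hA
  set M := IntermediateField.adjoin K {h} with hM
  have hhM : h ∈ M := IntermediateField.mem_adjoin_simple_self K h
  let I2 : Differential M := restrictDiff M
    (adjoin_closed h (C a * X) (by simp [hh']))
  have I2' : DifferentialAlgebra M L := ⟨fun a => rfl⟩
  have htr3 : Transcendental M q := by
    refine alg_prim (⟨h, hhM⟩ : M) q hq ?_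
    intro g hg
    exact no_prim h htr2 a hh' hA hB g g.2 (congrArg (fun x : M => (x : L)) hg)
  have i1 : AlgebraicIndependent k (fun _ : Unit => r) := by
    rw [algebraicIndependent_unique_type_iff]; exact htr
  have i2 := (i1.option_iff_transcendental h).2 (by
    have hle : Algebra.adjoin k (Set.range (fun _ : Unit => r)) ≤ K.toSubalgebra := by
      rw [Algebra.adjoin_le_iff]
      rintro _ ⟨_, rfl⟩
      exact hrK
    exact Transcendental.of_ringHom_of_comp_eq (S := K) (B := L)
      (Subalgebra.inclusion hle).toRingHom (RingHom.id L) htr2 (Subalgebra.inclusion_injective hle) rfl)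
  have i3 := (i2.option_iff_transcendental q).2 (by
    have hle : Algebra.adjoin k (Set.range (fun o : Option Unit => o.elim h (fun _ : Unit => r)))
        ≤ (M.restrictScalars k).toSubalgebra := by
      rw [Algebra.adjoin_le_iff]
      rintro _ ⟨o, rfl⟩
      rcases o with _ | o
      · exact hhM
      · exact M.algebraMap_mem ⟨r, hrK⟩
    exact Transcendental.of_ringHom_of_comp_eq (S := M) (B := L)
      (Subalgebra.inclusion hle).toRingHom (RingHom.id L) htr3 (Subalgebra.inclusion_injective hle) rfl)
  exact ⟨_, i3.comp _ (Fintype.equivFinOfCardEq (by simp) : Option (Option Unit) ≃ Fin 3).symm.injective⟩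

end final

lemma airy_extract {L : Type*} [Field L] [CharZero L] [Differential L] (T : L) (hT : T ≠ 0)
    (U V : Matrix (Fin 2) (Fin 2) L) (hUU : U * U = 1) (hVV : V * V = T • 1)
    (hVU : V * U = -(U * V))
    (hU' : U.map (fun x => x′) = -((2 : L) • (U * V)))
    (hV' : (2 * T) • V.map (fun x => x′) = V + U * V) :
    ∃ r h q : L, r′ = T - r ^ 2 ∧ h ≠ 0 ∧ h′ = -2 * r * h ∧ q′ = h := by
  have trU : U.trace = 0 := by
    have h1 : (V * (U * V)).trace = T * U.trace := by
      rw [Matrix.trace_mul_comm, mul_assoc, hVV]; simp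
    have h2 : (V * (U * V)).trace = -(T * U.trace) := by
      rw [← mul_assoc, hVU, neg_mul, mul_assoc, hVV]; simp
    have : 2 * T * U.trace = 0 := by linear_combination h2 - h1
    simpa [hT] using this
  have trV : V.trace = 0 := by
    have h1 : (U * (V * U)).trace = V.trace := by
      rw [Matrix.trace_mul_comm, mul_assoc, hUU]; simp
    have h2 : (U * (V * U)).trace = -V.trace := by
      rw [hVU, mul_neg, ← mul_assoc, hUU]; simp
    have : 2 * V.trace = 0 := by linear_combination h2 - h1
    simpa using this
  obtain ⟨x, hx⟩ : ∃ x, x = U 0 0 := ⟨_, rfl⟩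
  obtain ⟨y, hy⟩ : ∃ x, x = U 0 1 := ⟨_, rfl⟩
  obtain ⟨z, hz⟩ : ∃ x, x = U 1 0 := ⟨_, rfl⟩
  obtain ⟨α, hα⟩ : ∃ x, x = V 0 0 := ⟨_, rfl⟩
  obtain ⟨β, hβ⟩ : ∃ x, x = V 0 1 := ⟨_, rfl⟩
  obtain ⟨γ, hγ⟩ : ∃ x, x = V 1 0 := ⟨_, rfl⟩
  have hw : U 1 1 = -x := by
    rw [Matrix.trace_fin_two] at trU; rw [hx]; linear_combination trU
  have he : V 1 1 = -α := by
    rw [Matrix.trace_fin_two] at trV; rw [hα]; linear_combination trV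
  have e1 : x * x + y * z = 1 := by
    have := congrFun (congrFun hUU 0) 0
    simpa [Matrix.mul_apply, ← hx, ← hy, ← hz] using this
  have e2 : α * α + β * γ = T := by
    have := congrFun (congrFun hVV 0) 0
    simpa [Matrix.mul_apply, ← hα, ← hβ, ← hγ] using this
  have e3 : 2 * x * α + y * γ + z * β = 0 := by
    have := congrFun (congrFun hVU 0) 0
    simp [Matrix.mul_apply, ← hα, ← hβ, ← hγ, ← hx, ← hy, ← hz] at this
    linear_combination this
  have dx : x′ = -2 * (x * α + y * γ) := by
    have := congrFun (congrFun hU' 0) 0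
    simp [Matrix.mul_apply, ← hα, ← hβ, ← hγ, ← hx, ← hy, ← hz] at this
    linear_combination this
  have dz : z′ = -2 * (z * α - x * γ) := by
    have := congrFun (congrFun hU' 1) 0
    simp [Matrix.mul_apply, ← hα, ← hβ, ← hγ, ← hx, ← hy, ← hz, hw] at this
    linear_combination this
  have dα : 2 * T * α′ = α + x * α + y * γ := by
    have := congrFun (congrFun hV' 0) 0
    simp [Matrix.mul_apply, ← hα, ← hβ, ← hγ, ← hx, ← hy, ← hz] at this
    linear_combination this
  have dγ : 2 * T * γ′ = γ + z * α - x * γ := by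
    have := congrFun (congrFun hV' 1) 0
    simp [Matrix.mul_apply, ← hα, ← hβ, ← hγ, ← hx, ← hy, ← hz, hw] at this
    linear_combination this
  have hz0 : z ≠ 0 := by
    intro h
    rw [h] at dz e1 e3
    have hx0 : x ≠ 0 := by rintro rfl; simp at e1
    have hγ0 : γ = 0 := by simpa [hx0] using dz
    rw [hγ0] at e3 e2
    have hα0 : α = 0 := by simpa [hx0] using e3
    apply hT; rw [← e2, hα0]; ring
  set N := γ * (1 + x) - z * α with hN
  have hkey : T * z ^ 2 = N ^ 2 - 2 * N * γ := by
    rw [hN, ← e2]; linear_combination (-γ ^ 2) * e1 + (z * γ) * e3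
  have hN0 : N ≠ 0 := by
    intro h; rw [h] at hkey; simp [hT, hz0] at hkey
  have hdN : N′ = 2 * T * z := by
    have h1 : γ′ * (1 + x) - z * α′ = 0 := by
      have : 2 * T * (γ′ * (1 + x) - z * α′) = 0 := by
        linear_combination (1 + x) * dγ - z * dα - γ * e1
      simpa [hT] using this
    have h2 : N′ = γ′ * (1 + x) + γ * x′ - z′ * α - z * α′ := by
      rw [hN]; simp; ring
    rw [h2, dx, dz]
    linear_combination h1 + 2 * z * e2 - 2 * γ * e3
  have hdz : z′ = 2 * N - 2 * γ := by rw [dz, hN]; ring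
  have hdx : -x′ * z + (1 + x) * z′ = 2 * N := by
    rw [dx, dz, hN]; linear_combination 2 * γ * e1
  refine ⟨N / z, 2 * N / z ^ 2, -(1 + x) / z, ?_, ?_, ?_, ?_⟩
  · rw [Derivation.leibniz_div, hdN, hdz]
    simp only [smul_eq_mul]
    field_simp
    linear_combination hkey
  · simp [hN0, hz0]
  · have h2 : (2 * N)′ = 2 * N′ := by
      rw [two_mul, two_mul]; simp
    rw [Derivation.leibniz_div, Derivation.leibniz_pow, h2, hdN, hdz]
    simp only [smul_eq_mul, nsmul_eq_mul]
    field_simp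
    linear_combination z * hkey
  · have h2 : (-(1 + x))′ = - x′ := by simp
    rw [Derivation.leibniz_div, h2]
    simp only [smul_eq_mul]
    field_simp
    linear_combination hdx

/-- a bundled version of the derivation -/
@[reducible] def mkDiff {R : Type*} [CommRing R] (δ : R → R) (h : IsRingDeriv δ) : Differential R where
  deriv := Derivation.mk' (AddMonoidHom.toIntLinearMap (AddMonoidHom.mk' δ h.map_add))
    (by intro a b
        change δ (a * b) = a * δ b + b * δ a
        rw [h.leibniz]; ring)

end helpers

/-- Let `k = ℚ(t)` with `t′ = 1`, `Q = (1, t)_k`, and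
`d = d_{(u,v)} + ∂_ϑ` with `ϑ = −(1/(4t))u − v`. Then every differential splitting
field of `(Q, d)` has transcendence degree at least `3` over `k`. -/
theorem stmt_12
    (δk : RatFunc ℚ → RatFunc ℚ) (hδk : IsRingDeriv δk) (hX : δk RatFunc.X = 1)
    (Q : Type*) [Ring Q] [Algebra (RatFunc ℚ) Q]
    (u v : Q) (hu : u * u = 1)
    (hv : v * v = algebraMap (RatFunc ℚ) Q RatFunc.X)
    (huv : v * u = -(u * v))
    (bQ : Module.Basis (Fin 4) (RatFunc ℚ) Q) (hbQ : ⇑bQ = ![1, u, v, u * v])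
    (d : Q → Q) (hd : IsRingDeriv d) (hdk : RestrictsTo δk d)
    (ϑ : Q)
    (hϑ : ϑ = -(algebraMap (RatFunc ℚ) Q (1 / (4 * RatFunc.X)) * u) - v)
    (hdu : d u = u * ϑ - ϑ * u)
    (hdv : d v = algebraMap (RatFunc ℚ) Q (δk RatFunc.X / (2 * RatFunc.X)) * v
      + (v * ϑ - ϑ * v))
    (L : Type*) [Field L] [Algebra (RatFunc ℚ) L]
    (δL : L → L) (hδL : IsRingDeriv δL) (hresL : RestrictsTo δk δL)
    (hsplit : DiffSplits (RatFunc ℚ) Q d L δL) :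
    TrdegGE (RatFunc ℚ) L 3 := by
  let I1 : Differential (RatFunc ℚ) := mkDiff δk hδk
  let I2 : Differential L := mkDiff δL hδL
  have I3 : DifferentialAlgebra (RatFunc ℚ) L := ⟨hresL⟩
  have I4 : CharZero L := charZero_of_injective_algebraMap (algebraMap (RatFunc ℚ) L).injective
  obtain ⟨D, hD, hDt, φ, hφ⟩ := hsplit
  set T : L := algebraMap (RatFunc ℚ) L RatFunc.X with hT
  have hT0 : T ≠ 0 := by
    rw [hT]; simpa using RatFunc.X_ne_zero
  have hδ1 : δL 1 = 0 := by
    have := hδL.leibniz 1 1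
    simpa using this
  have hsc : ∀ (c : RatFunc ℚ) (w : Q), φ (1 ⊗ₜ[RatFunc ℚ] (algebraMap (RatFunc ℚ) Q c * w))
      = algebraMap (RatFunc ℚ) L c • φ (1 ⊗ₜ[RatFunc ℚ] w) := by
    intro c w
    rw [← Algebra.smul_def, ← map_smul φ, TensorProduct.smul_tmul', ← TensorProduct.smul_tmul,
      Algebra.smul_def, smul_eq_mul]
  have hmul : ∀ a b : Q, φ (1 ⊗ₜ[RatFunc ℚ] (a * b)) = φ (1 ⊗ₜ[RatFunc ℚ] a) * φ (1 ⊗ₜ[RatFunc ℚ] b) := by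
    intro a b
    rw [← map_mul, Algebra.TensorProduct.tmul_mul_tmul, one_mul]
  have hone : φ (1 ⊗ₜ[RatFunc ℚ] (1 : Q)) = 1 := by
    rw [← Algebra.TensorProduct.one_def, map_one]
  have hneg : ∀ a : Q, φ (1 ⊗ₜ[RatFunc ℚ] (-a)) = -φ (1 ⊗ₜ[RatFunc ℚ] a) := by
    intro a; rw [TensorProduct.tmul_neg, map_neg]
  have hadd : ∀ a b : Q, φ (1 ⊗ₜ[RatFunc ℚ] (a + b)) = φ (1 ⊗ₜ[RatFunc ℚ] a) + φ (1 ⊗ₜ[RatFunc ℚ] b) := by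
    intro a b; rw [TensorProduct.tmul_add, map_add]
  have hder : ∀ a : Q, (φ (1 ⊗ₜ[RatFunc ℚ] a)).map δL = φ (1 ⊗ₜ[RatFunc ℚ] (d a)) := by
    intro a; rw [← hφ, hDt, hδ1, TensorProduct.zero_tmul, zero_add]
  have hX0 : (RatFunc.X : RatFunc ℚ) ≠ 0 := RatFunc.X_ne_zero
  set s := algebraMap (RatFunc ℚ) Q (1 / (4 * RatFunc.X)) with hs
  have hsv : s * v = v * s := Algebra.commutes _ _
  have hsu : s * u = u * s := Algebra.commutes _ _
  have hdu' : d u = -(algebraMap (RatFunc ℚ) Q 2 * (u * v)) := by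
    rw [hdu, hϑ, map_ofNat]
    have h1 : u * (s * u) = s * u * u := by rw [← mul_assoc, ← hsu]
    have h2 : u * (-(s * u) - v) - (-(s * u) - v) * u = (s * u * u - u * (s * u)) - u * v + v * u := by
      noncomm_ring
    rw [h2, h1, huv, two_mul]; abel
  have hdv' : d v = algebraMap (RatFunc ℚ) Q (1 / (2 * RatFunc.X)) * (v + u * v) := by
    have h0 : algebraMap (RatFunc ℚ) Q (1 / (2 * RatFunc.X)) = s + s := by
      rw [hs, ← map_add]; congr 1; field_simp; norm_num
    rw [hdv, hX, hϑ, h0]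
    have h1 : v * (-(s * u) - v) - (-(s * u) - v) * v = s * (u * v) - v * s * u := by
      noncomm_ring
    rw [h1, ← hsv, mul_assoc s v u, huv]
    noncomm_ring
  obtain ⟨r, h, q, hr, h0, hh, hq⟩ := airy_extract T hT0 (φ (1 ⊗ₜ[RatFunc ℚ] u)) (φ (1 ⊗ₜ[RatFunc ℚ] v))
    (by rw [← hmul, hu, hone])
    (by rw [← hmul, hv, ← mul_one (algebraMap (RatFunc ℚ) Q RatFunc.X), hsc, hone])
    (by rw [← hmul, huv, hneg, hmul])
    (by
      refine (hder u).trans ?_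
      rw [hdu', hneg, hsc, hmul, map_ofNat])
    (by
      have h1 := hder v
      rw [hdv', hsc, hadd, hmul] at h1
      have h2 : (2 * T) * algebraMap (RatFunc ℚ) L (1 / (2 * RatFunc.X)) = 1 := by
        rw [map_div₀, map_mul, map_ofNat, map_one, ← hT]; field_simp
      refine (congrArg (fun m => (2 * T) • m) h1).trans ?_
      simp only [smul_smul, h2, one_smul])
  exact airy_trdeg (k := RatFunc ℚ) (by rw [RatFunc.algebraMap_X]; exact hX) r h q
    (by rw [RatFunc.algebraMap_X]; exact hr) h0 hh hq
end

section
/- Let (k,′) be a differential field of characteristic zero, α, β ∈ kˣ, Q = (α,β)_k, and let ξ be an element of an algebraic closure of k with ξ² = α, with k(ξ) carrying the unique extension of ′. Let a ∈ k and d = d_{(u,v)} + ∂_{au}. Then (Q,d) is split by some finite differential field extension of (k,′) if and only if there exist a natural number n ≥ 1 and a nonzero θ ∈ k(ξ) such that a = θ′/(nξθ). -/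
open scoped TensorProduct

universe u
theorem IsRingDeriv.map_zero' {A : Type*} [Ring A] {d : A → A} (h : IsRingDeriv d) : d 0 = 0 := by
  have := h.map_add 0 0
  simpa using this

/-- Bundle a ring derivation on a commutative ring as a Mathlib derivation. -/
def IsRingDeriv.toDer {A : Type*} [CommRing A] {d : A → A} (h : IsRingDeriv d) :
    Derivation ℤ A A :=
  Derivation.mk' (AddMonoidHom.mk' d h.map_add).toIntLinearMap (by
    intro x y
    simp [h.leibniz]
    ring)

theorem IsRingDeriv.toDer_apply {A : Type*} [CommRing A] {d : A → A} (h : IsRingDeriv d) (x : A) :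
    h.toDer x = d x := rfl

theorem exists_deriv_ext {K F : Type*} [Field K] [CharZero K] [Field F] [Algebra K F]
    [FiniteDimensional K F] {δ : K → K} (h : IsRingDeriv δ) :
    ∃ δF : F → F, IsRingDeriv δF ∧ RestrictsTo δ δF := by
  let : Differential K := ⟨h.toDer⟩
  let := Differential.differentialFiniteDimensional K F
  have := Differential.differentialAlgebraFiniteDimensional (F := K) (K := F)
  refine ⟨fun x => Differential.deriv x, ⟨fun x y => by simp, fun x y => ?_⟩, fun c => ?_⟩
  · simp; ring
  · exact DifferentialAlgebra.deriv_algebraMap c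

open Polynomial in
theorem exists_log_deriv {K M : Type*} [Field K] [Field M] [Algebra K M]
    {δ : K → K} {δM : M → M} (h : IsRingDeriv δ) (hM : IsRingDeriv δM) (hr : RestrictsTo δ δM)
    (y : M) (hy : y ≠ 0) (hint : IsIntegral K y) (c : K) (hc : δM y = algebraMap K M c * y) :
    ∃ m : ℕ, 1 ≤ m ∧ ∃ θ : K, θ ≠ 0 ∧ δ θ = m * c * θ := by
  let : Differential K := ⟨h.toDer⟩
  let : Differential M := ⟨hM.toDer⟩
  have : DifferentialAlgebra K M := ⟨hr⟩
  set p := minpoly K y with hp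
  have hmon : p.Monic := minpoly.monic hint
  have hpos : 0 < p.natDegree := minpoly.natDegree_pos hint
  refine ⟨p.natDegree, hpos, p.coeff 0, minpoly.coeff_zero_ne_zero hint hy, ?_⟩
  set q : K[X] := Differential.mapCoeffs p + C c * (derivative p * X) - C (p.natDegree * c) * p with hq
  have hq0 : q = 0 := by
    by_contra hne
    have h1 : aeval y q = 0 := by
      have h2 := Differential.deriv_aeval_eq (A := K) y p
      rw [hp, minpoly.aeval, ← hp] at h2
      have h3 : Differential.deriv y = algebraMap K M c * y := hc
      rw [h3] at h2
      simp only [hq, map_sub, map_add, map_mul, aeval_C, aeval_X]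
      rw [show aeval y p = 0 from minpoly.aeval K y]
      simp at h2
      linear_combination -h2
    have h4 := minpoly.degree_le_of_ne_zero K y hne h1
    have h5 : q.degree < p.natDegree := by
      rw [degree_lt_iff_coeff_zero]
      intro i hi
      obtain ⟨j, rfl⟩ : ∃ j, i = j + 1 := ⟨i - 1, by omega⟩
      simp only [hq, coeff_sub, coeff_add, coeff_C_mul, coeff_mul_X, coeff_derivative,
        Differential.coeff_mapCoeffs]
      rcases hi.eq_or_lt with hi | hi
      · have : p.coeff (j+1) = 1 := by rw [← hi]; exact hmon
        rw [this, hi]; simp [mul_comm]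
      · rw [coeff_eq_zero_of_natDegree_lt hi]; simp
    rw [← hp, degree_eq_natDegree hmon.ne_zero] at h4
    exact absurd (lt_of_le_of_lt h4 h5) (lt_irrefl _)
  have := congrArg (fun r => coeff r 0) hq0
  simp only [hq, coeff_sub, coeff_add, coeff_C_zero, mul_coeff_zero, coeff_X_zero,
        Differential.coeff_mapCoeffs, coeff_zero] at this
  change h.toDer _ + _ - _ = _ at this
  rw [h.toDer_apply] at this
  linear_combination this

theorem IsRingDeriv.inv {K : Type*} [Field K] {δ : K → K} (h : IsRingDeriv δ) {x c : K}
    (hx : x ≠ 0) (hc : δ x = c * x) : δ x⁻¹ = -c * x⁻¹ := by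
  have h1 : δ 1 = 0 := by
    have := h.leibniz 1 1
    simpa using this
  have h2 := h.leibniz x x⁻¹
  rw [mul_inv_cancel₀ hx, h1, hc] at h2
  have h3 : x * (δ x⁻¹ + c * x⁻¹) = 0 := by linear_combination -h2
  have h4 := (mul_eq_zero.1 h3).resolve_left hx
  linear_combination h4

theorem IsRingDeriv.inv_gen {K : Type*} [Field K] {δ : K → K} (h : IsRingDeriv δ) (x : K) :
    δ x⁻¹ = -(δ x * x⁻¹ * x⁻¹) := by
  by_cases hx : x = 0
  · simp [hx, h.map_zero']
  · rw [h.inv hx (c := δ x * x⁻¹) (by field_simp)]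
    ring

theorem IsRingDeriv.pow_log {K : Type*} [Field K] {δ : K → K} (h : IsRingDeriv δ) (x : K) (hx : x ≠ 0)
    (n : ℕ) : δ (x ^ n) = n * (δ x / x) * x ^ n := by
  induction n with
  | zero =>
    have := h.leibniz 1 1
    simpa using this
  | succ n ih =>
    rw [pow_succ, h.leibniz, ih]
    push_cast
    field_simp

theorem IsRingDeriv.sqrt_log {K M : Type*} [Field K] [CharZero K] [Field M] [Algebra K M]
    {δ : K → K} {δM : M → M} (hM : IsRingDeriv δM) (hr : RestrictsTo δ δM)
    {α : K} (hα : α ≠ 0) {z : M} (hz : z ^ 2 = algebraMap K M α) :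
    δM z = algebraMap K M (δ α / (2 * α)) * z := by
  have hα' : algebraMap K M α ≠ 0 := by simpa using hα
  have hz0 : z ≠ 0 := by
    rintro rfl
    exact hα' (by rw [← hz]; simp)
  have : CharZero M := charZero_of_injective_algebraMap (algebraMap K M).injective
  have h1 := hM.pow_log z hz0 2
  rw [hz, hr] at h1
  simp only [map_div₀, map_mul, map_ofNat]
  rw [h1]
  push_cast
  field_simp

theorem deriv_comm {k K M : Type*} [Field k] [CharZero k] [Field K] [Field M] [Algebra k K] [Algebra k M]
    {δ : k → k} {δK : K → K} {δM : M → M} (hK : IsRingDeriv δK) (hM : IsRingDeriv δM)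
    (hrK : RestrictsTo δ δK) (hrM : RestrictsTo δ δM)
    {α : k} (hα : α ≠ 0) {ξ : K} (hξ : ξ ^ 2 = algebraMap k K α)
    (hgen : IntermediateField.adjoin k {ξ} = ⊤) (σ : K →ₐ[k] M) (x : K) :
    δM (σ x) = σ (δK x) := by
  have hx : x ∈ IntermediateField.adjoin k {ξ} := by rw [hgen]; trivial
  induction hx using IntermediateField.adjoin_induction with
  | mem x hx =>
    obtain rfl : x = ξ := hx
    rw [hK.sqrt_log hrK hα hξ, hM.sqrt_log hrM hα (z := σ x) (by rw [← map_pow, hξ]; simp)]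
    simp
  | algebraMap x => rw [hrK]; simp [hrM x]
  | add x y _ _ h1 h2 => simp [hK.map_add, hM.map_add, h1, h2]
  | mul x y _ _ h1 h2 => simp [hK.leibniz, hM.leibniz, h1, h2]
  | inv x _ h1 => rw [map_inv₀, hM.inv_gen, hK.inv_gen, h1]; simp

/-- A common finite extension of `L` receiving `K`. -/
theorem exists_common {k K : Type*} {L : Type u} [Field k] [Field K] [Field L] [Algebra k K] [Algebra k L]
    {ξ : K} (hint : IsIntegral k ξ)
    (hgen : IntermediateField.adjoin k {ξ} = ⊤) :
    ∃ (M : Type u) (_ : Field M) (_ : Algebra L M) (σ : K →+* M), FiniteDimensional L M ∧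
      ∀ c : k, σ (algebraMap k K c) = algebraMap L M (algebraMap k L c) := by
  have hfd : FiniteDimensional k K := by
    have := IntermediateField.adjoin.finiteDimensional hint
    rw [hgen] at this
    exact LinearEquiv.finiteDimensional (IntermediateField.topEquiv (F := k) (E := K)).toLinearEquiv
  let σ : K →ₐ[k] AlgebraicClosure L := IsAlgClosed.lift
  let M : IntermediateField L (AlgebraicClosure L) := IntermediateField.adjoin L {σ ξ}
  have hmem : ∀ x, σ x ∈ M := by
    have : (⊤ : IntermediateField k K) ≤ (M.restrictScalars k).comap σ := by
      rw [← hgen, IntermediateField.adjoin_le_iff]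
      rintro x rfl
      exact IntermediateField.mem_adjoin_simple_self L (σ x)
    intro x
    exact this (show x ∈ ⊤ from trivial)
  refine ⟨M, inferInstance, inferInstance, σ.toRingHom.codRestrict M hmem, ?_, ?_⟩
  · exact IntermediateField.adjoin.finiteDimensional ((hint.map σ).tower_top)
  · intro c
    apply Subtype.ext
    change σ _ = _
    rw [σ.commutes]
    exact IsScalarTower.algebraMap_apply k L (AlgebraicClosure L) c

theorem forward_dir {k : Type*} [Field k] [CharZero k]
    {δk : k → k}
    {α β : k} (hα : α ≠ 0) (hβ : β ≠ 0)
    {Q : Type*} [Ring Q] [Algebra k Q]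
    {u v : Q} (hv : v * v = algebraMap k Q β)
    (huv : v * u = -(u * v)) (a : k)
    {d : Q → Q}
    (hdv : d v = (δk β / (2 * β)) • v - (2 * a) • (u * v))
    (hduv : d (u * v) = (δk α / (2 * α) + δk β / (2 * β)) • (u * v) - (2 * a * α) • v)
    {kξ : Type*} [Field kξ] [Algebra k kξ]
    {ξ : kξ} (hξ : ξ ^ 2 = algebraMap k kξ α)
    (hgen : IntermediateField.adjoin k {ξ} = ⊤)
    {δξ : kξ → kξ} (hδξ : IsRingDeriv δξ) (hresξ : RestrictsTo δk δξ)
    {L : Type u} [Field L] [Algebra k L] [FiniteDimensional k L] {δL : L → L}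
    (hL : IsRingDeriv δL) (hrL : RestrictsTo δk δL)
    (f : Q →ₐ[k] Matrix (Fin 2) (Fin 2) L) (hf : ∀ x, f (d x) = (f x).map δL) :
    (∃ n : ℕ, 1 ≤ n ∧ ∃ θ : kξ, θ ≠ 0 ∧
        algebraMap k kξ a = δξ θ / ((n : kξ) * ξ * θ)) := by
  have hint : IsIntegral k ξ := by
    refine IsIntegral.of_pow (n := 2) (by norm_num) ?_
    rw [hξ]; exact isIntegral_algebraMap
  obtain ⟨M, _, _, σ, hfd, hσ⟩ := exists_common (L := L) hint hgen
  let _ : Algebra k M := ((algebraMap L M).comp (algebraMap k L)).toAlgebra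
  have tow : IsScalarTower k L M := IsScalarTower.of_algebraMap_eq fun _ => rfl
  have chL : CharZero L := charZero_of_injective_algebraMap (algebraMap k L).injective
  have chM : CharZero M := charZero_of_injective_algebraMap (algebraMap k M).injective
  have chK : CharZero kξ := charZero_of_injective_algebraMap (algebraMap k kξ).injective
  obtain ⟨δM, hM, hrLM⟩ := exists_deriv_ext (F := M) hL
  have hrM : RestrictsTo δk δM := fun c => by
    rw [IsScalarTower.algebraMap_apply k L M, hrLM, hrL, ← IsScalarTower.algebraMap_apply]
  let σ' : kξ →ₐ[k] M := { σ with commutes' := hσ }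
  have hcomm := deriv_comm hδξ hM hresξ hrM hα hξ hgen σ'
  have hfdk : FiniteDimensional k M := FiniteDimensional.trans k L M
  let _ : Algebra kξ M := σ.toAlgebra
  have tow2 : IsScalarTower k kξ M := IsScalarTower.of_algebraMap_eq fun x => (hσ x).symm
  have hζα : (σ ξ) ^ 2 = algebraMap k M α := by
    rw [← map_pow, hξ]; exact hσ α
  have hζ' := hM.sqrt_log hrM hα hζα
  set ζ := σ ξ with hζ
  have hζ0 : ζ ≠ 0 := by
    intro h0
    rw [h0] at hζα
    have : algebraMap k M α ≠ 0 := by simpa using hα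
    exact this (by rw [← hζα]; simp)
  -- the nonzero entry
  have hex : ∃ i j, ζ * algebraMap L M (f v i j) + algebraMap L M (f (u * v) i j) ≠ 0 := by
    by_contra! hcon
    let F : Q →+* Matrix (Fin 2) (Fin 2) M := ((algebraMap L M).mapMatrix).comp f.toRingHom
    have hF : F (u * v) = (-ζ) • F v := by
      ext i j
      change algebraMap L M (f (u * v) i j) = (-ζ) * algebraMap L M (f v i j)
      linear_combination hcon i j
    have h1 : v * (u * v) = - ((u * v) * v) := by
      rw [← mul_assoc, huv, neg_mul]
    have h2 := congrArg F h1
    rw [map_neg, map_mul F v (u * v), map_mul F (u * v) v, hF, mul_smul_comm, smul_mul_assoc, ← map_mul, hv] at h2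
    have h3 : F (algebraMap k Q β) 0 0 = algebraMap k M β := by
      change algebraMap L M (f (algebraMap k Q β) 0 0) = _
      rw [f.commutes, Matrix.algebraMap_matrix_apply]
      simp [IsScalarTower.algebraMap_apply k L M]
    have h4 := congrFun (congrFun h2 0) 0
    simp only [Matrix.neg_apply, Matrix.smul_apply, h3, smul_eq_mul] at h4
    have hβ' : algebraMap k M β ≠ 0 := by simpa using hβ
    have : 2 * (ζ * algebraMap k M β) = 0 := by linear_combination -h4
    simp [hζ0, hβ'] at this
  obtain ⟨i, j, hy0⟩ := hex
  set y := ζ * algebraMap L M (f v i j) + algebraMap L M (f (u * v) i j) with hy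
  have hV : δL (f v i j) = algebraMap k L (δk β / (2 * β)) * f v i j
      - algebraMap k L (2 * a) * f (u * v) i j := by
    have := congrFun (congrFun (hf v) i) j
    rw [hdv, map_sub, map_smul, map_smul] at this
    rw [Matrix.sub_apply, Matrix.smul_apply, Matrix.smul_apply, Algebra.smul_def,
      Algebra.smul_def] at this
    exact this.symm
  have hW : δL (f (u * v) i j) = algebraMap k L (δk α / (2 * α) + δk β / (2 * β)) * f (u * v) i j
      - algebraMap k L (2 * a * α) * f v i j := by
    have := congrFun (congrFun (hf (u * v)) i) j
    rw [hduv, map_sub, map_smul, map_smul] at this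
    rw [Matrix.sub_apply, Matrix.smul_apply, Matrix.smul_apply, Algebra.smul_def,
      Algebra.smul_def] at this
    exact this.symm
  have hy' : δM y = (algebraMap k M (δk α / (2 * α)) + algebraMap k M (δk β / (2 * β))
      - 2 * algebraMap k M a * ζ) * y := by
    rw [hy, hM.map_add, hM.leibniz, hrLM, hrLM, hV, hW, hζ']
    simp only [map_sub, map_mul, map_add, ← IsScalarTower.algebraMap_apply k L M, ← hζα,
      map_ofNat]
    ring
  have hα' : algebraMap k M α ≠ 0 := by simpa using hα
  have hβ' : algebraMap k M β ≠ 0 := by simpa using hβ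
  -- the element with the required logarithmic derivative
  set t := algebraMap k M (α * β) * (y⁻¹ * y⁻¹) with ht
  have ht0 : t ≠ 0 := by simp [ht, hα, hβ, hy0]
  have hδαβ : algebraMap k M (δk (α * β)) = (2 * algebraMap k M (δk α / (2 * α))
      + 2 * algebraMap k M (δk β / (2 * β))) * algebraMap k M (α * β) := by
    rw [← hrM, map_mul, hM.leibniz, hrM, hrM]
    simp only [map_div₀, map_mul, map_ofNat]
    field_simp
  have ht' : δM t = algebraMap kξ M (4 * algebraMap k kξ a * ξ) * t := by
    have e1 : algebraMap kξ M (4 * algebraMap k kξ a * ξ) = 4 * algebraMap k M a * ζ := by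
      rw [map_mul, map_mul, ← IsScalarTower.algebraMap_apply k kξ M, map_ofNat]; rfl
    rw [e1, ht, hM.leibniz, hM.leibniz, hM.inv hy0 hy', hrM, hδαβ]
    ring
  have hintt : IsIntegral kξ t := (IsIntegral.of_finite k t).tower_top
  obtain ⟨m, hm, θ, hθ, hθ'⟩ := exists_log_deriv hδξ hM (fun x => hcomm x) t ht0 hintt _ ht'
  refine ⟨4 * m, by omega, θ, hθ, ?_⟩
  have hξ0 : ξ ≠ 0 := by
    rintro rfl
    exact hζ0 (by simp [hζ])
  have hm0 : (m : kξ) ≠ 0 := by exact_mod_cast (by omega : m ≠ 0)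
  rw [hθ']
  push_cast
  field_simp


theorem IsRingDeriv.matrix {L : Type*} [Field L] {δ : L → L} (h : IsRingDeriv δ) :
    IsRingDeriv (fun A : Matrix (Fin 2) (Fin 2) L => A.map δ) where
  map_add A B := by
    ext i j
    simp [h.map_add]
  leibniz A B := by
    ext i j
    simp [Matrix.mul_apply, h.map_add, h.leibniz]
    ring

theorem IsRingDeriv.matrix_smul {L : Type*} [Field L] {δ : L → L} (h : IsRingDeriv δ) (c : L)
    (A : Matrix (Fin 2) (Fin 2) L) : (c • A).map δ = δ c • A + c • A.map δ := by
  ext i j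
  simp [h.leibniz]

theorem exists_quat_hom {k : Type*} [Field k] {α β : k}
    {Q : Type*} [Ring Q] [Algebra k Q]
    {u v : Q} (hu : u * u = algebraMap k Q α) (hv : v * v = algebraMap k Q β)
    (huv : v * u = -(u * v))
    (bQ : Module.Basis (Fin 4) k Q) (hbQ : ⇑bQ = ![1, u, v, u * v])
    {A : Type*} [Ring A] [Algebra k A] (U V : A) (hU : U * U = algebraMap k A α)
    (hV : V * V = algebraMap k A β) (hUV : V * U = -(U * V)) :
    ∃ f : Q →ₐ[k] A, f u = U ∧ f v = V := by
  let b1 : QuaternionAlgebra.Basis Q α 0 β :=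
    { i := u, j := v, k := u * v,
      i_mul_i := by simp [hu, Algebra.algebraMap_eq_smul_one],
      j_mul_j := by simp [hv, Algebra.algebraMap_eq_smul_one],
      i_mul_j := rfl, j_mul_i := by simp [huv] }
  let b2 : QuaternionAlgebra.Basis A α 0 β :=
    { i := U, j := V, k := U * V,
      i_mul_i := by simp [hU, Algebra.algebraMap_eq_smul_one],
      j_mul_j := by simp [hV, Algebra.algebraMap_eq_smul_one],
      i_mul_j := rfl, j_mul_i := by simp [hUV] }
  have hbij : Function.Bijective b1.liftHom := by
    have : ⇑b1.liftHom =
        ⇑((QuaternionAlgebra.linearEquivTuple α 0 β).trans bQ.equivFun.symm) := by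
      funext x
      rw [LinearEquiv.trans_apply, Module.Basis.equivFun_symm_apply, hbQ]
      simp [b1, QuaternionAlgebra.Basis.lift, Fin.sum_univ_four, Algebra.algebraMap_eq_smul_one]
    rw [this]; exact LinearEquiv.bijective _
  let e := AlgEquiv.ofBijective b1.liftHom hbij
  refine ⟨b2.liftHom.comp e.symm.toAlgHom, ?_, ?_⟩
  · have : e.symm u = ⟨0, 1, 0, 0⟩ := by
      rw [AlgEquiv.symm_apply_eq]
      simp [e, QuaternionAlgebra.Basis.lift, b1]
    change b2.liftHom (e.symm u) = U
    rw [this]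
    simp [QuaternionAlgebra.Basis.lift, b2]
  · have : e.symm v = ⟨0, 0, 1, 0⟩ := by
      rw [AlgEquiv.symm_apply_eq]
      simp [e, QuaternionAlgebra.Basis.lift, b1]
    change b2.liftHom (e.symm v) = V
    rw [this]
    simp [QuaternionAlgebra.Basis.lift, b2]

theorem exists_roots {K : Type u} [Field K] (θ b : K) (n : ℕ) (hn : 1 ≤ n) :
    ∃ (M : Type u) (_ : Field M) (_ : Algebra K M) (η γ : M), FiniteDimensional K M ∧
      η ^ n = algebraMap K M θ ∧ γ ^ 2 = algebraMap K M b := by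
  obtain ⟨η, hη⟩ := IsAlgClosed.exists_pow_nat_eq (algebraMap K (AlgebraicClosure K) θ)
    (n := n) (by omega)
  obtain ⟨γ, hγ⟩ := IsAlgClosed.exists_pow_nat_eq (algebraMap K (AlgebraicClosure K) b)
    (n := 2) (by omega)
  refine ⟨IntermediateField.adjoin K {η, γ}, inferInstance, inferInstance,
    ⟨η, IntermediateField.subset_adjoin _ _ (by simp)⟩,
    ⟨γ, IntermediateField.subset_adjoin _ _ (by simp)⟩, ?_, ?_, ?_⟩
  · exact IntermediateField.finiteDimensional_adjoin_pair
      (Algebra.IsIntegral.isIntegral η) (Algebra.IsIntegral.isIntegral γ)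
  · exact Subtype.ext hη
  · exact Subtype.ext hγ

theorem diffSplits_of {k : Type*} [Field k] {δk : k → k}
    {Q : Type*} [Ring Q] [Algebra k Q]
    {u v : Q}
    (bQ : Module.Basis (Fin 4) k Q) (hbQ : ⇑bQ = ![1, u, v, u * v])
    {d : Q → Q} (hd : IsRingDeriv d) (hdk : RestrictsTo δk d)
    {L : Type*} [Field L] [CharZero L] [Algebra k L] {δL : L → L}
    (hL : IsRingDeriv δL) (hrL : RestrictsTo δk δL)
    (f : Q →ₐ[k] Matrix (Fin 2) (Fin 2) L)
    (hfu : f (d u) = (f u).map δL) (hfv : f (d v) = (f v).map δL)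
    {z p q : L} (hz : z ≠ 0) (hp : p ≠ 0) (hq : q ≠ 0)
    (hU : f u = !![z, 0; 0, -z]) (hV : f v = !![0, p; q, 0]) :
    DiffSplits k Q d L δL := by
  have hd1 : d 1 = 0 := by
    have := hd.leibniz 1 1
    simpa using this
  have hδ1 : δL 1 = 0 := by
    have := hL.leibniz 1 1
    simpa using this
  have hmul : ∀ x y, f (d x) = (f x).map δL → f (d y) = (f y).map δL →
      f (d (x * y)) = (f (x * y)).map δL := by
    intro x y hx hy
    have := hL.matrix.leibniz (f x) (f y)
    rw [hd.leibniz, map_add, map_mul, map_mul, hx, hy, map_mul, this]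
  have hf : ∀ x, f (d x) = (f x).map δL := by
    intro x
    have hx : x ∈ Submodule.span k (Set.range bQ) := by rw [bQ.span_eq]; trivial
    induction hx using Submodule.span_induction with
    | mem x h =>
      obtain ⟨i, rfl⟩ := h
      rw [hbQ]
      fin_cases i
      · have := hL.matrix.leibniz 1 1
        simp at this
        simp [hd1, this]
      · exact hfu
      · exact hfv
      · exact hmul _ _ hfu hfv
    | zero =>
      have := hL.matrix.map_zero'
      rw [hd.map_zero', map_zero, this]
    | add x y _ _ hx hy =>
      have := hL.matrix.map_add (f x) (f y)
      rw [hd.map_add, map_add, map_add, hx, hy, this]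
    | smul c x _ hx =>
      have h1 : d (c • x) = δk c • x + c • d x := by
        rw [Algebra.smul_def, hd.leibniz, hdk, Algebra.smul_def, Algebra.smul_def]
      have h2 : f (c • x) = algebraMap k L c • f x := by
        rw [map_smul, algebraMap_smul]
      rw [h1, h2, hL.matrix_smul, map_add, map_smul, map_smul, hx, hrL, algebraMap_smul,
        algebraMap_smul]
  let φ0 : L ⊗[k] Q →ₐ[L] Matrix (Fin 2) (Fin 2) L :=
    Algebra.TensorProduct.lift (Algebra.ofId L _) f (fun x y => Algebra.commutes x (f y))
  have hφ0 : ∀ y x, φ0 (y ⊗ₜ[k] x) = y • f x := by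
    intro y x
    rw [Algebra.smul_def]
    exact Algebra.TensorProduct.lift_tmul _ _ _ y x
  have hsurj : Function.Surjective φ0 := by
    intro A
    refine ⟨((A 0 0 + A 1 1) / 2) ⊗ₜ[k] 1 + ((A 0 0 - A 1 1) / (2 * z)) ⊗ₜ[k] u +
      ((A 0 1 / p + A 1 0 / q) / 2) ⊗ₜ[k] v +
      ((A 0 1 / p - A 1 0 / q) / (2 * z)) ⊗ₜ[k] (u * v), ?_⟩
    simp only [map_add, hφ0, map_mul, map_one, hU, hV]
    ext i j
    fin_cases i <;> fin_cases j <;> simp [Matrix.mul_apply] <;> field_simp <;> ring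
  have : Module.Finite k Q := Module.Finite.of_basis bQ
  have hinj : Function.Injective φ0 := by
    refine (LinearMap.injective_iff_surjective_of_finrank_eq_finrank (f := φ0.toLinearMap) ?_).2 hsurj
    rw [Module.finrank_baseChange, Module.finrank_eq_card_basis bQ, Module.finrank_matrix]
    simp
  let φ := AlgEquiv.ofBijective φ0 ⟨hinj, hsurj⟩
  have hφ : ∀ y x, φ (y ⊗ₜ[k] x) = y • f x := hφ0
  refine ⟨fun z => φ.symm ((φ z).map δL), ⟨?_, ?_⟩, ?_, φ, ?_⟩
  · intro x y
    have := hL.matrix.map_add (φ x) (φ y)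
    rw [map_add, this, map_add]
  · intro x y
    have := hL.matrix.leibniz (φ x) (φ y)
    rw [map_mul, this, map_add, map_mul, map_mul, φ.symm_apply_apply, φ.symm_apply_apply]
  · intro y x
    rw [AlgEquiv.symm_apply_eq, map_add, hφ, hφ, hφ, hL.matrix_smul, hf]
  · intro z
    simp

theorem backward_dir {k : Type*} [Field k] [CharZero k]
    {δk : k → k}
    {α β : k} (hα : α ≠ 0) (hβ : β ≠ 0)
    {Q : Type*} [Ring Q] [Algebra k Q]
    {u v : Q} (hu : u * u = algebraMap k Q α) (hv : v * v = algebraMap k Q β)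
    (huv : v * u = -(u * v))
    (bQ : Module.Basis (Fin 4) k Q) (hbQ : ⇑bQ = ![1, u, v, u * v]) (a : k)
    {d : Q → Q} (hd : IsRingDeriv d) (hdk : RestrictsTo δk d)
    (hdu : d u = (δk α / (2 * α)) • u)
    (hdv : d v = (δk β / (2 * β)) • v - (2 * a) • (u * v))
    {kξ : Type u} [Field kξ] [Algebra k kξ]
    {ξ : kξ} (hξ : ξ ^ 2 = algebraMap k kξ α)
    (hgen : IntermediateField.adjoin k {ξ} = ⊤)
    {δξ : kξ → kξ} (hδξ : IsRingDeriv δξ) (hresξ : RestrictsTo δk δξ)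
    (n : ℕ) (hn : 1 ≤ n) (θ : kξ) (hθ : θ ≠ 0)
    (h : algebraMap k kξ a = δξ θ / ((n : kξ) * ξ * θ)) :
    ∃ (L : Type u) (_ : Field L) (_ : Algebra k L) (δL : L → L),
        IsRingDeriv δL ∧ RestrictsTo δk δL ∧ FiniteDimensional k L ∧
        DiffSplits k Q d L δL := by
  have hint : IsIntegral k ξ := by
    refine IsIntegral.of_pow (n := 2) (by norm_num) ?_
    rw [hξ]; exact isIntegral_algebraMap
  have hfd : FiniteDimensional k kξ := by
    have := IntermediateField.adjoin.finiteDimensional hint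
    rw [hgen] at this
    exact LinearEquiv.finiteDimensional
      (IntermediateField.topEquiv (F := k) (E := kξ)).toLinearEquiv
  obtain ⟨L, _, _, η, γ, hfd2, hη, hγ⟩ := exists_roots θ (algebraMap k kξ β) n hn
  have chK : CharZero kξ := charZero_of_injective_algebraMap (algebraMap k kξ).injective
  have chL : CharZero L := charZero_of_injective_algebraMap (algebraMap kξ L).injective
  let _ : Algebra k L := ((algebraMap kξ L).comp (algebraMap k kξ)).toAlgebra
  have tow : IsScalarTower k kξ L := IsScalarTower.of_algebraMap_eq fun _ => rfl
  obtain ⟨δL, hL, hrξ⟩ := exists_deriv_ext (F := L) hδξ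
  have hrL : RestrictsTo δk δL := fun c => by
    rw [IsScalarTower.algebraMap_apply k kξ L, hrξ, hresξ, ← IsScalarTower.algebraMap_apply]
  refine ⟨L, inferInstance, inferInstance, δL, hL, hrL, FiniteDimensional.trans k kξ L, ?_⟩
  rw [← IsScalarTower.algebraMap_apply k kξ L] at hγ
  set z := algebraMap kξ L ξ with hz
  have hzα : z ^ 2 = algebraMap k L α := by
    rw [hz, ← map_pow, hξ, ← IsScalarTower.algebraMap_apply]
  have hα' : algebraMap k L α ≠ 0 := by simpa using hα
  have hβ' : algebraMap k L β ≠ 0 := by simpa using hβ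
  have hz0 : z ≠ 0 := by
    intro h0; rw [h0] at hzα; exact hα' (by rw [← hzα]; simp)
  have hγ0 : γ ≠ 0 := by
    intro h0; rw [h0] at hγ; exact hβ' (by rw [← hγ]; simp)
  have hθL : algebraMap kξ L θ ≠ 0 := by simpa using hθ
  have hη0 : η ≠ 0 := by
    intro h0; rw [h0, zero_pow (by omega)] at hη; exact hθL hη.symm
  have hn0 : (n : kξ) ≠ 0 := by exact_mod_cast (by omega : n ≠ 0)
  have hnL : (n : L) ≠ 0 := by exact_mod_cast (by omega : n ≠ 0)
  have hξ0 : ξ ≠ 0 := by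
    rintro rfl
    exact hz0 (by simp [hz])
  have hz' := hL.sqrt_log hrL hα hzα
  have hγ' := hL.sqrt_log hrL hβ hγ
  have hη' : δL η = algebraMap k L a * z * η := by
    have h1 := hL.pow_log η hη0 n
    have h2 : δξ θ = n * algebraMap k kξ a * ξ * θ := by rw [h]; field_simp
    rw [hη, hrξ, h2] at h1
    simp only [map_mul, map_natCast, ← IsScalarTower.algebraMap_apply k kξ L, ← hz] at h1
    have h3 : (n * algebraMap kξ L θ) * (algebraMap k L a * z) =
      (n * algebraMap kξ L θ) * (δL η / η) := by linear_combination h1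
    have h4 := mul_left_cancel₀ (mul_ne_zero hnL hθL) h3
    rw [h4]; field_simp
  set b := algebraMap k L (δk β / (2 * β)) with hb
  set p := γ * (η⁻¹ * η⁻¹) with hp
  set q := γ * (η * η) with hq
  have hp0 : p ≠ 0 := by simp [hp, hγ0, hη0]
  have hq0 : q ≠ 0 := by simp [hq, hγ0, hη0]
  have hpq : p * q = algebraMap k L β := by
    rw [← hγ, hp, hq]; field_simp
  have hp' : δL p = (b - 2 * algebraMap k L a * z) * p := by
    rw [hp, hL.leibniz, hL.leibniz, hL.inv hη0 hη', hγ']; ring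
  have hq' : δL q = (b + 2 * algebraMap k L a * z) * q := by
    rw [hq, hL.leibniz, hL.leibniz, hη', hγ']; ring
  obtain ⟨f, hfu, hfv⟩ := exists_quat_hom hu hv huv bQ hbQ
    (A := Matrix (Fin 2) (Fin 2) L) !![z, 0; 0, -z] !![0, p; q, 0]
    (by
      ext i j
      rw [Matrix.algebraMap_matrix_apply, ← hzα]
      fin_cases i <;> fin_cases j <;> simp [Matrix.mul_apply] <;> ring)
    (by
      ext i j
      rw [Matrix.algebraMap_matrix_apply, ← hpq]
      fin_cases i <;> fin_cases j <;> simp [Matrix.mul_apply] <;> ring)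
    (by
      ext i j
      fin_cases i <;> fin_cases j <;> simp [Matrix.mul_apply] <;> ring)
  have hL0 := hL.map_zero'
  have hLneg : δL (-z) = - δL z := by
    have := hL.map_add z (-z)
    rw [add_neg_cancel, hL0] at this
    linear_combination -this
  refine diffSplits_of bQ hbQ hd hdk hL hrL f ?_ ?_ hz0 hp0 hq0 hfu hfv
  · rw [hdu, map_smul, hfu]
    ext i j
    rw [Matrix.smul_apply, Algebra.smul_def]
    fin_cases i <;> fin_cases j <;> simp only [Matrix.map_apply] <;>
      simp [hL0, hLneg, hz']
  · rw [hdv, map_sub, map_smul, map_smul, map_mul, hfu, hfv]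
    ext i j
    rw [Matrix.sub_apply, Matrix.smul_apply, Matrix.smul_apply, Algebra.smul_def,
      Algebra.smul_def, ← hb, map_mul, map_ofNat]
    fin_cases i <;> fin_cases j <;> simp [Matrix.mul_apply, hL0, hp', hq'] <;> ring


/-- For `d = d_{(u,v)} + ∂_{au}` on `Q = (α, β)_k`, the algebra
`(Q, d)` is split by a finite differential field extension of `(k, ′)` if and only if
`a = θ′/(nξθ)` for some `n ≥ 1` and some nonzero `θ ∈ k(ξ)`, where `ξ² = α`. -/
theorem stmt_13 (k : Type u) [Field k] [CharZero k]
    (δk : k → k) (hδk : IsRingDeriv δk)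
    (α β : k) (hα : α ≠ 0) (hβ : β ≠ 0)
    (Q : Type u) [Ring Q] [Algebra k Q]
    (u v : Q) (hu : u * u = algebraMap k Q α) (hv : v * v = algebraMap k Q β)
    (huv : v * u = -(u * v))
    (bQ : Module.Basis (Fin 4) k Q) (hbQ : ⇑bQ = ![1, u, v, u * v])
    (a : k) (w : Q) (hw : w = algebraMap k Q a * u)
    (d : Q → Q) (hd : IsRingDeriv d) (hdk : RestrictsTo δk d)
    (hdu : d u = algebraMap k Q (δk α / (2 * α)) * u + (u * w - w * u))
    (hdv : d v = algebraMap k Q (δk β / (2 * β)) * v + (v * w - w * v))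
    (kξ : Type u) [Field kξ] [Algebra k kξ]
    (ξ : kξ) (hξ : ξ ^ 2 = algebraMap k kξ α)
    (hgen : IntermediateField.adjoin k {ξ} = ⊤)
    (δξ : kξ → kξ) (hδξ : IsRingDeriv δξ) (hresξ : RestrictsTo δk δξ) :
    (∃ (L : Type u) (_ : Field L) (_ : Algebra k L) (δL : L → L),
        IsRingDeriv δL ∧ RestrictsTo δk δL ∧ FiniteDimensional k L ∧
        DiffSplits k Q d L δL) ↔
    (∃ n : ℕ, 1 ≤ n ∧ ∃ θ : kξ, θ ≠ 0 ∧
        algebraMap k kξ a = δξ θ / ((n : kξ) * ξ * θ)) := by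
  have hwu : u * w - w * u = 0 := by
    rw [hw, mul_assoc, ← mul_assoc u, ← Algebra.commutes a u, mul_assoc, sub_self]
  have hwv : v * w - w * v = - ((2 * a) • (u * v)) := by
    rw [hw, ← mul_assoc, ← Algebra.commutes a v, mul_assoc, huv, mul_assoc,
      ← Algebra.smul_def, ← Algebra.smul_def]
    module
  have hdu' : d u = (δk α / (2 * α)) • u := by
    rw [hdu, hwu, add_zero, Algebra.smul_def]
  have hdv' : d v = (δk β / (2 * β)) • v - (2 * a) • (u * v) := by
    rw [hdv, hwv, Algebra.smul_def (δk β / (2 * β)), sub_eq_add_neg]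
  constructor
  · rintro ⟨L, _, _, δL, hL, hrL, hfd, D, hD, hDt, φ, hφ⟩
    have hduv : d (u * v) = (δk α / (2 * α) + δk β / (2 * β)) • (u * v) - (2 * a * α) • v := by
      rw [hd.leibniz, hdu', hdv', mul_sub, mul_smul_comm, mul_smul_comm, smul_mul_assoc,
        ← mul_assoc u u v, hu, ← Algebra.smul_def]
      module
    have hδ1 : δL 1 = 0 := by
      have := hL.leibniz 1 1
      simpa using this
    refine forward_dir hα hβ hv huv a hdv' hduv hξ hgen hδξ hresξ hL hrL
      ((φ.restrictScalars k).toAlgHom.comp Algebra.TensorProduct.includeRight) ?_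
    intro x
    change φ (1 ⊗ₜ[k] d x) = (φ (1 ⊗ₜ[k] x)).map δL
    rw [← hφ, hDt, hδ1, TensorProduct.zero_tmul, zero_add]
  · rintro ⟨n, hn, θ, hθ, h⟩
    exact backward_dir hα hβ hu hv huv bQ hbQ a hd hdk hdu' hdv' hξ hgen hδξ hresξ n hn θ hθ h
end

section
/- Let (k,′) be a differential field of characteristic zero and α ∈ kˣ a non-square, and let ξ satisfy ξ² = α, so that k(ξ)/k is a quadratic extension carrying the unique extension of ′. For every nonzero θ ∈ k(ξ): θ′/θ lies in ξ·k if and only if the norm N_{k(ξ)/k}(θ) = θ·θ̄ is a constant, i.e., (N_{k(ξ)/k}(θ))′ = 0, where θ̄ denotes the image of θ under the nontrivial k-automorphism of k(ξ). -/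
open scoped TensorProduct

/-- Let `α ∈ kˣ` be a non-square and `k(ξ)/k` the quadratic extension
with `ξ² = α`, with its unique extended derivation. For nonzero `θ ∈ k(ξ)`, the
logarithmic derivative `θ′/θ` lies in `ξ·k` if and only if the norm `θ·θ̄` is a
constant, where `θ̄` is the image of `θ` under the nontrivial `k`-automorphism. -/
theorem stmt_14 (k : Type*) [Field k] [CharZero k]
    (δk : k → k) (hδk : IsRingDeriv δk)
    (α : k) (hα : α ≠ 0) (hns : ∀ c : k, c ^ 2 ≠ α)
    (kξ : Type*) [Field kξ] [Algebra k kξ]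
    (ξ : kξ) (hξ : ξ ^ 2 = algebraMap k kξ α)
    (hgen : IntermediateField.adjoin k {ξ} = ⊤)
    (δξ : kξ → kξ) (hδξ : IsRingDeriv δξ) (hres : RestrictsTo δk δξ)
    (conj : kξ ≃ₐ[k] kξ) (hconj : conj ξ = -ξ)
    (θ : kξ) (hθ : θ ≠ 0) :
    (∃ c : k, δξ θ / θ = ξ * algebraMap k kξ c) ↔ δξ (θ * conj θ) = 0 := by
  have : CharZero kξ := charZero_of_injective_algebraMap (algebraMap k kξ).injective
  have hα' : algebraMap k kξ α ≠ 0 := by simpa using hα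
  have hξ0 : ξ ≠ 0 := by
    rintro rfl
    apply hα'
    rw [← hξ]; simp
  have hint : IsIntegral k ξ := by
    refine IsIntegral.of_pow (n := 2) (by norm_num) ?_
    rw [hξ]
    exact isIntegral_algebraMap
  have hspan : ∀ x : kξ, ∃ a b : k, x = algebraMap k kξ a + algebraMap k kξ b * ξ := by
    intro x
    have hx : x ∈ Algebra.adjoin k {ξ} := by
      rw [← IntermediateField.adjoin_simple_toSubalgebra_of_isAlgebraic hint.isAlgebraic, hgen]
      trivial
    induction hx using Algebra.adjoin_induction with
    | mem x hx =>
      rw [Set.mem_singleton_iff] at hx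
      exact ⟨0, 1, by simp [hx]⟩
    | algebraMap r => exact ⟨r, 0, by simp⟩
    | add x y _ _ h1 h2 =>
      obtain ⟨a, b, rfl⟩ := h1
      obtain ⟨c, d, rfl⟩ := h2
      exact ⟨a + c, b + d, by simp only [map_add]; ring⟩
    | mul x y _ _ h1 h2 =>
      obtain ⟨a, b, rfl⟩ := h1
      obtain ⟨c, d, rfl⟩ := h2
      refine ⟨a * c + b * d * α, a * d + b * c, ?_⟩
      simp only [map_add, map_mul, ← hξ]; ring
  have hdξ : δξ ξ = algebraMap k kξ (δk α / (2 * α)) * ξ := by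
    have h1 : δξ (ξ ^ 2) = algebraMap k kξ (δk α) := by rw [hξ, hres]
    rw [pow_two, hδξ.leibniz] at h1
    rw [map_div₀, ← h1, map_mul, ← hξ, map_ofNat]
    field_simp
    ring
  have hcomm : ∀ x, δξ (conj x) = conj (δξ x) := by
    intro x
    obtain ⟨a, b, rfl⟩ := hspan x
    have e : conj (algebraMap k kξ a + algebraMap k kξ b * ξ)
        = algebraMap k kξ a + algebraMap k kξ (-b) * ξ := by
      simp [hconj]
    have hneg : δk (-b) = - δk b := by
      have h0 : δk 0 = 0 := by simpa using hδk.map_add 0 0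
      have h1 := hδk.map_add b (-b)
      rw [add_neg_cancel, h0] at h1
      linear_combination -h1
    rw [e]
    simp only [hδξ.map_add, hδξ.leibniz, hres _, hdξ, hneg, map_add, map_mul,
      AlgEquiv.commutes, hconj]
    simp only [map_neg]
    ring
  have hcθ : conj θ ≠ 0 := by simpa using hθ
  have key : δξ (θ * conj θ) = (δξ θ / θ + conj (δξ θ / θ)) * (θ * conj θ) := by
    rw [hδξ.leibniz, hcomm, map_div₀]
    field_simp
  rw [key, mul_eq_zero, or_iff_left (mul_ne_zero hθ hcθ)]
  constructor
  · rintro ⟨c, hc⟩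
    rw [hc]
    simp [hconj]
  · intro h
    obtain ⟨a, b, hab⟩ := hspan (δξ θ / θ)
    rw [hab] at h ⊢
    simp only [map_add, map_mul, AlgEquiv.commutes, hconj] at h
    have ha : algebraMap k kξ a = 0 := by linear_combination h / 2
    exact ⟨b, by rw [ha]; ring⟩
end

section
/- Let k = ℚ(t) with the derivation t′ = 1, let Q = (1,t)_k be the quaternion algebra with generators u, v satisfying u² = 1, v² = t, vu = −uv, and let d = d_{(u,v)} + ∂_{−(1/(8t))u}. Then every trace-zero element w ∈ Q (i.e., w in the k-span of u, v, uv) with w² ≠ 0 and d(w) ∈ k·w lies in k·u. Consequently, d is not a standard derivation on Q. -/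
open scoped TensorProduct

open scoped Polynomial in
theorem aux_poly (δ : RatFunc ℚ → RatFunc ℚ) (h : IsRingDeriv δ) (hX : δ RatFunc.X = 1)
    (P : ℚ[X]) : δ (algebraMap ℚ[X] (RatFunc ℚ) P)
      = algebraMap ℚ[X] (RatFunc ℚ) (Polynomial.derivative P) := by
  let A : RatFunc ℚ →+ RatFunc ℚ := AddMonoidHom.mk' δ h.map_add
  have h1 : δ 1 = 0 := by
    have := h.leibniz 1 1
    simpa using this
  have hC : ∀ q : ℚ, δ (algebraMap ℚ (RatFunc ℚ) q) = 0 := by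
    intro q
    have h2 := A.toRatLinearMap.map_smul q 1
    have h3 : A.toRatLinearMap (1 : RatFunc ℚ) = 0 := h1
    rw [h3, smul_zero, Algebra.smul_def, mul_one] at h2
    exact h2
  have hC' : ∀ q : ℚ, δ (algebraMap ℚ[X] (RatFunc ℚ) (Polynomial.C q)) = 0 := by
    intro q
    have : algebraMap ℚ[X] (RatFunc ℚ) (Polynomial.C q) = algebraMap ℚ (RatFunc ℚ) q := by
      rw [IsScalarTower.algebraMap_apply ℚ ℚ[X] (RatFunc ℚ)]; rfl
    rw [this, hC]
  induction P using Polynomial.induction_on with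
  | C a => rw [hC', Polynomial.derivative_C, map_zero]
  | add p q hp hq => simp only [map_add, h.map_add, hp, hq]
  | monomial n a ih =>
    rw [pow_succ, ← mul_assoc, map_mul, h.leibniz, ih, RatFunc.algebraMap_X, hX,
      Polynomial.derivative_mul (f := Polynomial.C a * Polynomial.X ^ n), Polynomial.derivative_X,
      map_add (algebraMap ℚ[X] (RatFunc ℚ)), mul_one, mul_one,
      map_mul (algebraMap ℚ[X] (RatFunc ℚ)) (Polynomial.derivative _), RatFunc.algebraMap_X]

open scoped Polynomial in
theorem aux_coeff (P Q : ℚ[X]) :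
    (Polynomial.X * Polynomial.derivative P * Q).coeff (P.natDegree + Q.natDegree)
      = P.natDegree * (P.leadingCoeff * Q.leadingCoeff) := by
  have hc : ∀ n, (Polynomial.X * Polynomial.derivative P).coeff n = n * P.coeff n := by
    intro n
    cases n with
    | zero => simp
    | succ n => rw [Polynomial.coeff_X_mul, Polynomial.coeff_derivative]; push_cast; ring
  rw [Polynomial.coeff_mul_add_eq_of_natDegree_le _ le_rfl, hc, Polynomial.leadingCoeff,
    Polynomial.leadingCoeff]
  · ring
  · rw [Polynomial.natDegree_le_iff_coeff_eq_zero]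
    intro n hn
    rw [hc, Polynomial.coeff_eq_zero_of_natDegree_lt hn, mul_zero]

open scoped Polynomial in
theorem aux_log (δ : RatFunc ℚ → RatFunc ℚ) (h : IsRingDeriv δ) (hX : δ RatFunc.X = 1)
    (f : RatFunc ℚ) (hf : f ≠ 0) (m : ℤ) (hm : 4 * RatFunc.X * δ f = (m : RatFunc ℚ) * f) : (4 : ℤ) ∣ m := by
  obtain ⟨P, Q, hQ, rfl⟩ := IsFractionRing.div_surjective (A := ℚ[X]) f
  have hQ0 : Q ≠ 0 := nonZeroDivisors.ne_zero hQ
  have hQ1 : algebraMap ℚ[X] (RatFunc ℚ) Q ≠ 0 := by simpa using hQ0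
  have hP0 : P ≠ 0 := by rintro rfl; simp at hf
  have h1 := h.leibniz (algebraMap ℚ[X] (RatFunc ℚ) P / algebraMap ℚ[X] (RatFunc ℚ) Q)
    (algebraMap ℚ[X] (RatFunc ℚ) Q)
  rw [div_mul_cancel₀ _ hQ1, aux_poly δ h hX, aux_poly δ h hX] at h1
  have hfQ := div_mul_cancel₀ (algebraMap ℚ[X] (RatFunc ℚ) P) hQ1
  set D := δ (algebraMap ℚ[X] (RatFunc ℚ) P / algebraMap ℚ[X] (RatFunc ℚ) Q)
  have h2 : algebraMap ℚ[X] (RatFunc ℚ)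
      (4 * (Polynomial.X * Polynomial.derivative P * Q)
        - 4 * (Polynomial.X * Polynomial.derivative Q * P))
      = algebraMap ℚ[X] (RatFunc ℚ) ((m : ℚ[X]) * (P * Q)) := by
    simp only [map_sub, map_mul, map_ofNat, map_intCast, RatFunc.algebraMap_X]
    rw [h1]
    linear_combination (algebraMap ℚ[X] (RatFunc ℚ) Q) ^ 2 * hm
      + ((m : RatFunc ℚ) * algebraMap ℚ[X] (RatFunc ℚ) Q + 4 * RatFunc.X
        * algebraMap ℚ[X] (RatFunc ℚ) (Polynomial.derivative Q)) * hfQ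
  have h3 := RatFunc.algebraMap_injective ℚ h2
  have h4 := congrArg (fun p => Polynomial.coeff p (P.natDegree + Q.natDegree)) h3
  have e4 : (4 : ℚ[X]) = Polynomial.C 4 := rfl
  have em : (m : ℚ[X]) = Polynomial.C (m : ℚ) := by simp
  simp only [Polynomial.coeff_sub] at h4
  rw [e4, em, Polynomial.coeff_C_mul, Polynomial.coeff_C_mul, Polynomial.coeff_C_mul, aux_coeff,
    add_comm P.natDegree, aux_coeff, add_comm Q.natDegree, Polynomial.coeff_mul_degree_add_degree]
    at h4
  have hne : P.leadingCoeff * Q.leadingCoeff ≠ 0 := by simp [hP0, hQ0]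
  have h5 : (4 * ((P.natDegree : ℤ) - Q.natDegree) : ℚ) = m := by
    apply mul_right_cancel₀ hne
    push_cast
    linear_combination h4
  refine ⟨(P.natDegree : ℤ) - Q.natDegree, ?_⟩
  exact_mod_cast h5.symm

theorem aux_quot (δ : RatFunc ℚ → RatFunc ℚ) (h : IsRingDeriv δ) (hX : δ RatFunc.X = 1)
    (p a l : RatFunc ℚ) (hp : p ≠ 0) (ha : a ≠ 0) (m n : ℤ) 
    (h1 : 4 * RatFunc.X * δ p = (m : RatFunc ℚ) * p + l * p)
    (h2 : 4 * RatFunc.X * δ a = (n : RatFunc ℚ) * a + l * a) : (4 : ℤ) ∣ m - n := by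
  apply aux_log δ h hX (p / a) (div_ne_zero hp ha)
  have h3 := h.leibniz (p / a) a
  rw [div_mul_cancel₀ _ ha] at h3
  apply mul_right_cancel₀ ha
  have : ((m - n : ℤ) : RatFunc ℚ) * (p / a) * a = (m - n) * p := by
    push_cast; field_simp
  rw [this]
  have h4 : p / a * (4 * RatFunc.X * δ a) = p * ((n : RatFunc ℚ) + l) := by
    rw [h2]; field_simp
  linear_combination h1 - h4 - 4 * RatFunc.X * h3

/-- Let `k = ℚ(t)` with `t′ = 1`, `Q = (1, t)_k` and
`d = d_{(u,v)} + ∂_{−(1/(8t))u}`. Every trace-zero `w ∈ Q` with `w² ≠ 0` and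
`d(w) ∈ k·w` lies in `k·u`; consequently `d` is not a standard derivation on `Q`. -/
theorem stmt_17
    (δk : RatFunc ℚ → RatFunc ℚ) (hδk : IsRingDeriv δk) (hX : δk RatFunc.X = 1)
    (Q : Type*) [Ring Q] [Algebra (RatFunc ℚ) Q]
    (u v : Q) (hu : u * u = 1)
    (hv : v * v = algebraMap (RatFunc ℚ) Q RatFunc.X)
    (huv : v * u = -(u * v))
    (bQ : Module.Basis (Fin 4) (RatFunc ℚ) Q) (hbQ : ⇑bQ = ![1, u, v, u * v])
    (w₀ : Q) (hw₀ : w₀ = -(algebraMap (RatFunc ℚ) Q (1 / (8 * RatFunc.X)) * u))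
    (d : Q → Q) (hd : IsRingDeriv d) (hdk : RestrictsTo δk d)
    (hdu : d u = u * w₀ - w₀ * u)
    (hdv : d v = algebraMap (RatFunc ℚ) Q (δk RatFunc.X / (2 * RatFunc.X)) * v
      + (v * w₀ - w₀ * v)) :
    (∀ w ∈ Submodule.span (RatFunc ℚ) ({u, v, u * v} : Set Q), w * w ≠ 0 →
      (∃ c : RatFunc ℚ, d w = algebraMap (RatFunc ℚ) Q c * w) →
      ∃ c₀ : RatFunc ℚ, w = algebraMap (RatFunc ℚ) Q c₀ * u) ∧
    ¬ (∃ w₁ w₂ : Q,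
        w₁ ∈ Submodule.span (RatFunc ℚ) ({u, v, u * v} : Set Q) ∧
        w₂ ∈ Submodule.span (RatFunc ℚ) ({u, v, u * v} : Set Q) ∧
        (∃ c : RatFunc ℚ, c ≠ 0 ∧ w₁ * w₁ = algebraMap (RatFunc ℚ) Q c) ∧
        (∃ c : RatFunc ℚ, c ≠ 0 ∧ w₂ * w₂ = algebraMap (RatFunc ℚ) Q c) ∧
        w₂ * w₁ = -(w₁ * w₂) ∧
        (∃ c₁ c₂ : RatFunc ℚ, d w₁ = algebraMap (RatFunc ℚ) Q c₁
          + algebraMap (RatFunc ℚ) Q c₂ * w₁) ∧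
        (∃ c₁ c₂ : RatFunc ℚ, d w₂ = algebraMap (RatFunc ℚ) Q c₁
          + algebraMap (RatFunc ℚ) Q c₂ * w₂)) := by
  have hX0 : (RatFunc.X : RatFunc ℚ) ≠ 0 := RatFunc.X_ne_zero
  have hli : ∀ a b c e : RatFunc ℚ, a • (1 : Q) + b • u + c • v + e • (u * v) = 0 →
      a = 0 ∧ b = 0 ∧ c = 0 ∧ e = 0 := by
    intro a b c e h
    have h1 := Fintype.linearIndependent_iff.1 bQ.linearIndependent ![a, b, c, e]
      (by rw [hbQ]; simpa [Fin.sum_univ_four] using h)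
    exact ⟨h1 0, h1 1, h1 2, h1 3⟩
  have hsm : ∀ (c : RatFunc ℚ) (x : Q), d (c • x) = δk c • x + c • d x := by
    intro c x
    rw [Algebra.smul_def, hd.leibniz, hdk, Algebra.smul_def, Algebra.smul_def]
  have hdu' : d u = 0 := by
    rw [hdu, hw₀, ← Algebra.smul_def]
    simp
  have hdv' : d v = (1 / (2 * RatFunc.X) : RatFunc ℚ) • v
      + (1 / (4 * RatFunc.X) : RatFunc ℚ) • (u * v) := by
    rw [hdv, hw₀, ← Algebra.smul_def, ← Algebra.smul_def, hX]
    have e : (1 / (4 * RatFunc.X) : RatFunc ℚ)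
      = 1 / (8 * RatFunc.X) + 1 / (8 * RatFunc.X) := by field_simp; norm_num
    rw [e, add_smul, mul_neg, neg_mul, mul_smul_comm, smul_mul_assoc, huv, smul_neg]
    abel
  have huuv : u * (u * v) = v := by rw [← mul_assoc, hu, one_mul]
  have hduv : d (u * v) = (1 / (2 * RatFunc.X) : RatFunc ℚ) • (u * v)
      + (1 / (4 * RatFunc.X) : RatFunc ℚ) • v := by
    rw [hd.leibniz, hdu', hdv', zero_mul, zero_add, mul_add, mul_smul_comm, mul_smul_comm, huuv]
  have hspan : ∀ w ∈ Submodule.span (RatFunc ℚ) ({u, v, u * v} : Set Q),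
      ∃ a b c : RatFunc ℚ, w = a • u + b • v + c • (u * v) := by
    intro w hw
    obtain ⟨a, b, c, h⟩ := Submodule.mem_span_triple.1 hw
    exact ⟨a, b, c, h.symm⟩
  -- the key computation
  have key : ∀ w ∈ Submodule.span (RatFunc ℚ) ({u, v, u * v} : Set Q), w * w ≠ 0 →
      (∃ c₁ c : RatFunc ℚ, d w = algebraMap (RatFunc ℚ) Q c₁ + algebraMap (RatFunc ℚ) Q c * w) →
      ∃ c₀ : RatFunc ℚ, w = algebraMap (RatFunc ℚ) Q c₀ * u := by
    rintro w hw hww ⟨c₁, l, hl⟩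
    obtain ⟨a, b, c, rfl⟩ := hspan w hw
    rw [Algebra.algebraMap_eq_smul_one, ← Algebra.smul_def, hd.map_add, hd.map_add, hsm, hsm, hsm,
      hdu', hdv', hduv] at hl
    obtain ⟨-, ha, hb, hc⟩ := hli (-c₁) (δk a - l * a)
      (δk b + b * (1 / (2 * RatFunc.X)) + c * (1 / (4 * RatFunc.X)) - l * b)
      (δk c + c * (1 / (2 * RatFunc.X)) + b * (1 / (4 * RatFunc.X)) - l * c) (by
        rw [← sub_eq_zero] at hl
        rw [← hl]
        simp only [sub_smul, add_smul, mul_smul, neg_smul, smul_add, smul_zero]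
        abel)
    have hp : 4 * RatFunc.X * δk (b + c)
        = ((-3 : ℤ) : RatFunc ℚ) * (b + c) + (4 * RatFunc.X * l) * (b + c) := by
      rw [hδk.map_add]
      field_simp at hb hc
      push_cast
      refine mul_left_cancel₀ (two_ne_zero (α := RatFunc ℚ)) ?_
      linear_combination hb + hc
    have hq : 4 * RatFunc.X * δk (b - c)
        = ((-1 : ℤ) : RatFunc ℚ) * (b - c) + (4 * RatFunc.X * l) * (b - c) := by
      have e : δk (b - c) = δk b - δk c := by
        have := hδk.map_add (b - c) c
        rw [sub_add_cancel] at this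
        rw [this]; ring
      rw [e]
      field_simp at hb hc
      push_cast
      refine mul_left_cancel₀ (two_ne_zero (α := RatFunc ℚ)) ?_
      linear_combination hb - hc
    have ha' : 4 * RatFunc.X * δk a
        = ((0 : ℤ) : RatFunc ℚ) * a + (4 * RatFunc.X * l) * a := by
      push_cast
      linear_combination 4 * RatFunc.X * ha
    have hfin : b + c = 0 ∧ b - c = 0 := by
      by_cases ha0 : a = 0
      · exfalso
        subst ha0
        have hsq : ((0 : RatFunc ℚ) • u + b • v + c • (u * v))
            * ((0 : RatFunc ℚ) • u + b • v + c • (u * v))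
            = algebraMap (RatFunc ℚ) Q (RatFunc.X * ((b + c) * (b - c))) := by
          have e1 : v * (u * v) = -(RatFunc.X : RatFunc ℚ) • u := by
            rw [← mul_assoc, huv, neg_mul, mul_assoc, hv, ← Algebra.commutes, neg_smul,
              Algebra.smul_def]
          have e2 : u * v * v = (RatFunc.X : RatFunc ℚ) • u := by
            rw [mul_assoc, hv, ← Algebra.commutes, Algebra.smul_def]
          have e3 : u * v * (u * v) = -(RatFunc.X : RatFunc ℚ) • (1 : Q) := by
            rw [mul_assoc, e1, mul_smul_comm, hu]
          have e4 : v * v = (RatFunc.X : RatFunc ℚ) • (1 : Q) := by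
            rw [hv, Algebra.algebraMap_eq_smul_one]
          have e5 : (RatFunc.X * ((b + c) * (b - c)) : RatFunc ℚ)
            = b * b * RatFunc.X - c * c * RatFunc.X := by ring
          rw [zero_smul, zero_add, Algebra.algebraMap_eq_smul_one, e5]
          simp only [mul_add, add_mul, smul_mul_smul_comm, e1, e2, e3, e4]
          rw [mul_comm c b]
          simp only [sub_smul, mul_smul, neg_smul, smul_neg]
          abel
        have hp0 : b + c ≠ 0 := by
          intro h; apply hww; rw [hsq, h]; simp
        have hq0 : b - c ≠ 0 := by
          intro h; apply hww; rw [hsq, h]; simp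
        have := aux_quot δk hδk hX _ _ _ hp0 hq0 _ _ hp hq
        omega
      · constructor
        · by_contra h0
          have := aux_quot δk hδk hX _ _ _ h0 ha0 _ _ hp ha'
          omega
        · by_contra h0
          have := aux_quot δk hδk hX _ _ _ h0 ha0 _ _ hq ha'
          omega
    have hc0 : c = 0 := by
      refine mul_left_cancel₀ (two_ne_zero (α := RatFunc ℚ)) ?_
      linear_combination hfin.1 - hfin.2
    have hb0 : b = 0 := by
      linear_combination hfin.1 - hc0
    refine ⟨a, ?_⟩
    rw [hc0, hb0, ← Algebra.smul_def]
    simp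
  have hinj : Function.Injective (algebraMap (RatFunc ℚ) Q) := by
    rw [injective_iff_map_eq_zero]
    intro c hc
    refine (hli c 0 0 0 ?_).1
    rw [← Algebra.algebraMap_eq_smul_one, hc]
    simp
  refine ⟨?_, ?_⟩
  · rintro w hw hww ⟨c, hc⟩
    exact key w hw hww ⟨0, c, by rw [hc, map_zero, zero_add]⟩
  · rintro ⟨w₁, w₂, h₁, h₂, ⟨s₁, hs₁, hq₁⟩, ⟨s₂, hs₂, hq₂⟩, hanti, hd₁, hd₂⟩
    have n₁ : w₁ * w₁ ≠ 0 := by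
      rw [hq₁]; exact (map_ne_zero_iff _ hinj).2 hs₁
    have n₂ : w₂ * w₂ ≠ 0 := by
      rw [hq₂]; exact (map_ne_zero_iff _ hinj).2 hs₂
    obtain ⟨a, rfl⟩ := key w₁ h₁ n₁ hd₁
    obtain ⟨b, rfl⟩ := key w₂ h₂ n₂ hd₂
    simp only [← Algebra.smul_def, smul_mul_smul_comm, hu] at hanti n₁ n₂
    have h3 := (hli (b * a + a * b) 0 0 0 (by rw [add_smul, hanti]; simp)).1
    have h4 : a * b = 0 := by
      refine mul_left_cancel₀ (two_ne_zero (α := RatFunc ℚ)) ?_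
      linear_combination h3
    rcases mul_eq_zero.1 h4 with h | h
    · apply n₁; rw [h]; simp
    · apply n₂; rw [h]; simp
end

section
/- Let (k,′) be a differential field of characteristic zero, α, β ∈ kˣ, Q = (α,β)_k, and d a derivation on Q restricting to ′ on k. If (L,′) is a differential field extension of (k,′) that splits (Q,d), then the derivation d* = d⊗id_L + id_Q⊗′ on Q⊗_k L is a standard derivation: there exist trace-zero elements w₁, w₂ ∈ Q⊗_k L with w₁², w₂² ∈ Lˣ, w₂w₁ = −w₁w₂, d*(w₁) ∈ L·w₁ and d*(w₂) ∈ L·w₂. -/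
open scoped TensorProduct

/-- If a differential field extension `(L, ′)` splits the differential
quaternion algebra `(Q, d)`, then the induced derivation `d*` on `Q ⊗_k L` is standard:
there are trace-zero `w₁, w₂` with `w₁², w₂² ∈ Lˣ`, `w₂w₁ = −w₁w₂`, `d*(w₁) ∈ L·w₁`
and `d*(w₂) ∈ L·w₂`. -/
theorem stmt_18 (k : Type*) [Field k] [CharZero k]
    (δk : k → k) (hδk : IsRingDeriv δk)
    (α β : k) (hα : α ≠ 0) (hβ : β ≠ 0)
    (Q : Type*) [Ring Q] [Algebra k Q]
    (u v : Q) (hu : u * u = algebraMap k Q α) (hv : v * v = algebraMap k Q β)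
    (huv : v * u = -(u * v))
    (bQ : Module.Basis (Fin 4) k Q) (hbQ : ⇑bQ = ![1, u, v, u * v])
    (d : Q → Q) (hd : IsRingDeriv d) (hdk : RestrictsTo δk d)
    (L : Type*) [Field L] [Algebra k L]
    (δL : L → L) (hδL : IsRingDeriv δL) (hresL : RestrictsTo δk δL)
    (D : L ⊗[k] Q → L ⊗[k] Q) (hD : IsRingDeriv D)
    (hDt : ∀ (y : L) (x : Q), D (y ⊗ₜ[k] x) = δL y ⊗ₜ[k] x + y ⊗ₜ[k] d x)
    (hsplit : ∃ φ : (L ⊗[k] Q) ≃ₐ[L] Matrix (Fin 2) (Fin 2) L,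
      ∀ z, φ (D z) = (φ z).map δL) :
    ∃ w₁ w₂ : L ⊗[k] Q,
      w₁ ∈ Submodule.span L
        ({(1 : L) ⊗ₜ[k] u, (1 : L) ⊗ₜ[k] v, (1 : L) ⊗ₜ[k] (u * v)} : Set (L ⊗[k] Q)) ∧
      w₂ ∈ Submodule.span L
        ({(1 : L) ⊗ₜ[k] u, (1 : L) ⊗ₜ[k] v, (1 : L) ⊗ₜ[k] (u * v)} : Set (L ⊗[k] Q)) ∧
      (∃ c : L, c ≠ 0 ∧ w₁ * w₁ = algebraMap L (L ⊗[k] Q) c) ∧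
      (∃ c : L, c ≠ 0 ∧ w₂ * w₂ = algebraMap L (L ⊗[k] Q) c) ∧
      w₂ * w₁ = -(w₁ * w₂) ∧
      (∃ c : L, D w₁ = c • w₁) ∧
      (∃ c : L, D w₂ = c • w₂) := by
  obtain ⟨φ, hφ⟩ := hsplit
  have hL : CharZero L := charZero_of_injective_algebraMap (algebraMap k L).injective
  have h2 : (2 : L) ≠ 0 := two_ne_zero
  have hd0 : δL 0 = 0 := by
    have := hδL.map_add 0 0
    simpa using this
  have hd1 : δL 1 = 0 := by
    have := hδL.leibniz 1 1
    simpa using this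
  have hdn : δL (-1) = 0 := by
    have := hδL.map_add 1 (-1)
    rw [add_neg_cancel, hd0, hd1, zero_add] at this
    exact this.symm
  -- the images of u and v
  have tens : ∀ c : k, (1 : L) ⊗ₜ[k] (algebraMap k Q c)
      = algebraMap L (L ⊗[k] Q) (algebraMap k L c) := by
    intro c
    rw [Algebra.TensorProduct.algebraMap_apply, Algebra.algebraMap_self_apply,
      Algebra.algebraMap_eq_smul_one (A := Q), Algebra.algebraMap_eq_smul_one (A := L),
      TensorProduct.smul_tmul]
  have hU : φ (1 ⊗ₜ u) * φ (1 ⊗ₜ u) = algebraMap L _ (algebraMap k L α) := by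
    rw [← map_mul, Algebra.TensorProduct.tmul_mul_tmul, hu, one_mul, tens, AlgEquiv.commutes]
  have hV : φ (1 ⊗ₜ v) * φ (1 ⊗ₜ v) = algebraMap L _ (algebraMap k L β) := by
    rw [← map_mul, Algebra.TensorProduct.tmul_mul_tmul, hv, one_mul, tens, AlgEquiv.commutes]
  have hW : φ (1 ⊗ₜ (u * v)) = φ (1 ⊗ₜ u) * φ (1 ⊗ₜ v) := by
    rw [← map_mul, Algebra.TensorProduct.tmul_mul_tmul, one_mul]
  have hVU : φ (1 ⊗ₜ v) * φ (1 ⊗ₜ u) = -(φ (1 ⊗ₜ u) * φ (1 ⊗ₜ v)) := by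
    rw [← hW, ← map_mul, Algebra.TensorProduct.tmul_mul_tmul, huv, one_mul,
      TensorProduct.tmul_neg, map_neg]
  have key : ∀ (X Y : Matrix (Fin 2) (Fin 2) L) (b : L), b ≠ 0 →
      Y * Y = algebraMap L _ b → Y * X = -(X * Y) → X.trace = 0 := by
    intro X Y b hb hY hYX
    have e1 : (Y * X * Y).trace = (X * (Y * Y)).trace := by
      rw [Matrix.trace_mul_comm, ← Matrix.mul_assoc, Matrix.trace_mul_comm]
    have e2 : (Y * X * Y).trace = -(X * (Y * Y)).trace := by
      rw [hYX, neg_mul, Matrix.trace_neg, Matrix.mul_assoc]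
    have e3 : (X * (Y * Y)).trace = b * X.trace := by
      rw [hY, Algebra.algebraMap_eq_smul_one, mul_smul_comm, mul_one, Matrix.trace_smul,
        smul_eq_mul]
    have e4 : 2 * (b * X.trace) = 0 := by
      rw [← e3]; linear_combination e2 - e1
    simpa [hb, h2] using e4
  have hα' : algebraMap k L α ≠ 0 := by simpa using hα
  have hβ' : algebraMap k L β ≠ 0 := by simpa using hβ
  have tU : (φ (1 ⊗ₜ u)).trace = 0 := key _ _ _ hβ' hV hVU
  have tV : (φ (1 ⊗ₜ v)).trace = 0 := key _ _ _ hα' hU (by rw [hVU, neg_neg])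
  have tW : (φ (1 ⊗ₜ (u * v))).trace = 0 := by
    have e := Matrix.trace_mul_comm (φ (1 ⊗ₜ v)) (φ (1 ⊗ₜ u))
    rw [hVU, Matrix.trace_neg] at e
    rw [hW]
    have e4 : 2 * (φ (1 ⊗ₜ u) * φ (1 ⊗ₜ v)).trace = 0 := by linear_combination -e
    simpa [h2] using e4
  have mem : ∀ M : Matrix (Fin 2) (Fin 2) L, M.trace = 0 → φ.symm M ∈ Submodule.span L
        ({(1 : L) ⊗ₜ[k] u, (1 : L) ⊗ₜ[k] v, (1 : L) ⊗ₜ[k] (u * v)} : Set (L ⊗[k] Q)) := by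
    intro M hM
    have hs := (Algebra.TensorProduct.basis L bQ).sum_repr (φ.symm M)
    generalize (Algebra.TensorProduct.basis L bQ).repr (φ.symm M) = r at hs
    simp only [Fin.sum_univ_four, Algebra.TensorProduct.basis_apply, hbQ] at hs
    simp only [Matrix.cons_val] at hs
    have h0 : r 0 = 0 := by
      have e := congrArg (fun z => (φ z).trace) hs
      simp only [map_add, map_smul, Matrix.trace_add, Matrix.trace_smul, tU, tV, tW,
        AlgEquiv.apply_symm_apply, hM, ← Algebra.TensorProduct.one_def, map_one,
        Matrix.trace_one, smul_eq_mul, mul_zero, add_zero] at e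
      simpa using e
    rw [← hs, h0, zero_smul, zero_add]
    refine add_mem (add_mem ?_ ?_) ?_ <;>
      exact Submodule.smul_mem _ _ (Submodule.subset_span (by simp))
  have hconst : ∀ M : Matrix (Fin 2) (Fin 2) L, M.map δL = 0 →
      ∃ c : L, D (φ.symm M) = c • φ.symm M := by
    intro M hM
    refine ⟨0, ?_⟩
    apply φ.injective
    rw [hφ, AlgEquiv.apply_symm_apply, hM, zero_smul, map_zero]
  refine ⟨φ.symm !![1, 0; 0, -1], φ.symm !![0, 1; 1, 0], mem _ ?_, mem _ ?_,
    ⟨1, one_ne_zero, ?_⟩, ⟨1, one_ne_zero, ?_⟩, ?_, hconst _ ?_, hconst _ ?_⟩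
  · simp [Matrix.trace_fin_two]
  · simp [Matrix.trace_fin_two]
  · rw [← map_mul, map_one, ← map_one φ.symm]
    congr 1
    simp [Matrix.one_fin_two]
  · rw [← map_mul, map_one, ← map_one φ.symm]
    congr 1
    simp [Matrix.one_fin_two]
  · rw [← map_mul φ.symm, ← map_mul φ.symm, ← map_neg φ.symm]
    congr 1
    simp
  · ext i j
    fin_cases i <;> fin_cases j <;> simp [hd0, hd1, hdn]
  · ext i j
    fin_cases i <;> fin_cases j <;> simp [hd0, hd1]
end

section
/- Let (k,′) be a differential field of characteristic zero, α, β ∈ kˣ, Q = (α,β)_k, and d a derivation on Q restricting to ′ on k. Then d becomes standard over some finite field extension of k (i.e., there is a finite differential field extension (L,′) of (k,′) such that d* is a standard derivation on Q⊗_k L) if and only if (Q,d) is split by some finite differential field extension of (k,′). -/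
open scoped TensorProduct

universe u

/-- quaternionic frame of constants gives a differential splitting -/
theorem aux_split {M A : Type*} [Field M] [CharZero M] [Ring A] [Algebra M A]
    (hrank : Module.finrank M A = 4) (δ : M → M) (hδ : IsRingDeriv δ)
    (D : A → A) (hD : IsRingDeriv D) (hDs : ∀ (y : M) (a : A), D (y • a) = δ y • a + y • D a)
    (w₁ w₂ : A) (h1 : w₁ * w₁ = 1) (h2 : w₂ * w₂ = 1) (h12 : w₂ * w₁ = -(w₁ * w₂))
    (hD1 : D w₁ = 0) (hD2 : D w₂ = 0) :
    ∃ φ : A ≃ₐ[M] Matrix (Fin 2) (Fin 2) M, ∀ z, φ (D z) = (φ z).map δ := by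
  have hD3 : D (w₁ * w₂) = 0 := by rw [hD.leibniz, hD1, hD2]; simp
  have hDone : D 1 = 0 := by
    have := hD.leibniz 1 1
    simpa using this
  have hδone : δ 1 = 0 := by
    have := hδ.leibniz 1 1
    simpa using this
  have hδzero : δ 0 = 0 := by
    have := hδ.map_add 0 0
    simpa using this
  have hδneg : ∀ x, δ (-x) = - δ x := fun x => by
    have := hδ.map_add x (-x)
    rw [add_neg_cancel, hδzero] at this
    exact (neg_eq_of_add_eq_zero_right this.symm).symm
  have hδsub : ∀ x y, δ (x - y) = δ x - δ y := fun x y => by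
    rw [sub_eq_add_neg, hδ.map_add, hδneg, sub_eq_add_neg]
  have hδhalf : δ (2⁻¹ : M) = 0 := by
    have h : δ ((2⁻¹ : M) + 2⁻¹) = 0 := by
      rw [← two_mul, mul_inv_cancel₀ two_ne_zero, hδone]
    rw [hδ.map_add, ← two_mul] at h
    simpa using h
  have hδm : ∀ x, δ (2⁻¹ * x) = 2⁻¹ * δ x := fun x => by
    rw [hδ.leibniz, hδhalf]; simp
  obtain ⟨w₃, hw3⟩ : ∃ w₃, w₃ = w₁ * w₂ := ⟨_, rfl⟩
  rw [← hw3] at h12 hD3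
  have h13 : w₁ * w₃ = w₂ := by rw [hw3, ← mul_assoc, h1, one_mul]
  have h32 : w₃ * w₂ = w₁ := by rw [hw3, mul_assoc, h2, mul_one]
  have h31 : w₃ * w₁ = - w₂ := by rw [hw3, mul_assoc, h12, mul_neg, h13]
  have h23 : w₂ * w₃ = - w₁ := by rw [hw3, ← mul_assoc, h12, neg_mul, h32]
  have h33 : w₃ * w₃ = -1 := by rw [hw3, mul_assoc, ← mul_assoc w₂, h12, neg_mul, h32, mul_neg, h1]
  let ψl : Matrix (Fin 2) (Fin 2) M →ₗ[M] A :=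
    { toFun := fun X => (2⁻¹ * (X 0 0 + X 1 1)) • (1 : A) + (2⁻¹ * (X 0 0 - X 1 1)) • w₁
        + (2⁻¹ * (X 0 1 + X 1 0)) • w₂ + (2⁻¹ * (X 0 1 - X 1 0)) • w₃
      map_add' := fun X Y => by simp only [Matrix.add_apply]; module
      map_smul' := fun c X => by simp only [Matrix.smul_apply, smul_eq_mul, RingHom.id_apply]; module }
  have hψl : ∀ X, ψl X = (2⁻¹ * (X 0 0 + X 1 1)) • (1 : A) + (2⁻¹ * (X 0 0 - X 1 1)) • w₁
        + (2⁻¹ * (X 0 1 + X 1 0)) • w₂ + (2⁻¹ * (X 0 1 - X 1 0)) • w₃ := fun X => rfl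
  let ψ : Matrix (Fin 2) (Fin 2) M →ₐ[M] A := AlgHom.ofLinearMap ψl
    (by rw [hψl]; simp [← two_mul, one_add_one_eq_two])
    (fun X Y => by
      simp only [hψl, Matrix.mul_apply, Fin.sum_univ_two, add_mul, mul_add, smul_mul_smul_comm,
        h1, h2, ← hw3, h12, h13, h32, h31, h23, h33, one_mul, mul_one]
      module)
  have hψ : ∀ X, ψ X = (2⁻¹ * (X 0 0 + X 1 1)) • (1 : A) + (2⁻¹ * (X 0 0 - X 1 1)) • w₁
        + (2⁻¹ * (X 0 1 + X 1 0)) • w₂ + (2⁻¹ * (X 0 1 - X 1 0)) • w₃ := fun X => rfl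
  have hnt : Nontrivial A := Module.nontrivial_of_finrank_pos (R := M) (by omega)
  have hinj : Function.Injective ψ := RingHom.injective (ψ : Matrix (Fin 2) (Fin 2) M →+* A)
  have hfd : FiniteDimensional M A := Module.finite_of_finrank_pos (by omega)
  have hsurj : Function.Surjective ψ := by
    have := (LinearMap.injective_iff_surjective_of_finrank_eq_finrank (f := ψ.toLinearMap)
      (by rw [hrank, Module.finrank_matrix]; simp)).1 hinj
    exact this
  let e := AlgEquiv.ofBijective ψ ⟨hinj, hsurj⟩
  refine ⟨e.symm, fun z => ?_⟩
  obtain ⟨X, rfl⟩ := e.surjective z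
  rw [e.symm_apply_apply, AlgEquiv.symm_apply_eq]
  change D (ψ X) = ψ _
  simp only [hψ, hD.map_add, hDs, hD1, hD2, hD3, hDone, Matrix.map_apply, hδm, hδ.map_add, hδsub,
    smul_zero, add_zero]

/-- the derivation on a tensor product -/
theorem aux_tensor {k : Type*} [Field k] {δk : k → k}
    {Q : Type*} [Ring Q] [Algebra k Q] {d : Q → Q} (hd : IsRingDeriv d) (hdk : RestrictsTo δk d)
    {M : Type*} [Field M] [Algebra k M] {δ : M → M} (hδ : IsRingDeriv δ)
    (hδr : RestrictsTo δk δ) :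
    ∃ D : M ⊗[k] Q → M ⊗[k] Q, IsRingDeriv D ∧
      (∀ (y : M) (x : Q), D (y ⊗ₜ[k] x) = δ y ⊗ₜ[k] x + y ⊗ₜ[k] d x) := by
  let dδ : M →+ M := AddMonoidHom.mk' δ hδ.map_add
  let dd : Q →+ Q := AddMonoidHom.mk' d hd.map_add
  let f : M →+ Q →+ M ⊗[k] Q := AddMonoidHom.mk' (fun y => AddMonoidHom.mk'
    (fun x => δ y ⊗ₜ[k] x + y ⊗ₜ[k] d x) (fun a b => by
      simp only [hd.map_add, TensorProduct.tmul_add]; abel)) (fun a b => by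
      ext x
      simp only [hδ.map_add, TensorProduct.add_tmul, AddMonoidHom.mk'_apply, AddMonoidHom.add_apply]; abel)
  let D : M ⊗[k] Q →+ M ⊗[k] Q := TensorProduct.liftAddHom f (fun (r : k) m n => by
    change δ (r • m) ⊗ₜ[k] n + (r • m) ⊗ₜ[k] d n = δ m ⊗ₜ[k] (r • n) + m ⊗ₜ[k] d (r • n)
    have e1 : δ (r • m) = δk r • m + r • δ m := by
      rw [Algebra.smul_def, hδ.leibniz, hδr, Algebra.smul_def, Algebra.smul_def]
    have e2 : d (r • n) = δk r • n + r • d n := by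
      rw [Algebra.smul_def, hd.leibniz, hdk, Algebra.smul_def, Algebra.smul_def]
    rw [e1, e2, TensorProduct.add_tmul, TensorProduct.tmul_add]
    simp only [TensorProduct.tmul_smul, TensorProduct.smul_tmul']
    abel)
  have hDt : ∀ (y : M) (x : Q), D (y ⊗ₜ[k] x) = δ y ⊗ₜ[k] x + y ⊗ₜ[k] d x := fun y x => rfl
  refine ⟨D, ⟨map_add D, fun x y => ?_⟩, hDt⟩
  induction x with
  | zero => simp
  | add a b ha hb => simp only [add_mul, map_add, ha, hb]; abel
  | tmul a b =>
    induction y with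
    | zero => simp
    | add a b ha hb => simp only [mul_add, map_add, ha, hb]; abel
    | tmul a' b' =>
      simp only [Algebra.TensorProduct.tmul_mul_tmul, hDt, hδ.leibniz, hd.leibniz,
        TensorProduct.add_tmul, TensorProduct.tmul_add, add_mul, mul_add]
      abel

theorem aux_smul {k : Type*} [Field k]
    {Q : Type*} [Ring Q] [Algebra k Q] {d : Q → Q}
    {M : Type*} [Field M] [Algebra k M] {δ : M → M} (hδ : IsRingDeriv δ)
    {D : M ⊗[k] Q → M ⊗[k] Q} (hD : IsRingDeriv D)
    (hDt : ∀ (y : M) (x : Q), D (y ⊗ₜ[k] x) = δ y ⊗ₜ[k] x + y ⊗ₜ[k] d x) 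
    (y : M) (a : M ⊗[k] Q) : D (y • a) = δ y • a + y • D a := by
  have hD0 : D 0 = 0 := by
    have := hD.map_add 0 0
    simpa using this
  induction a with
  | zero => simp [hD0]
  | add a b ha hb => simp only [smul_add, hD.map_add, ha, hb]; abel
  | tmul a b =>
    simp only [TensorProduct.smul_tmul', smul_eq_mul, hDt, hδ.leibniz, TensorProduct.add_tmul,
      smul_add]
    abel

/-- extension of derivations to finite extensions -/
theorem aux_ext {L M : Type*} [Field L] [CharZero L] [Field M] [Algebra L M]
    [FiniteDimensional L M] (δ : L → L) (hδ : IsRingDeriv δ) :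
    ∃ δM : M → M, IsRingDeriv δM ∧ RestrictsTo δ δM := by
  letI : Differential L := ⟨Derivation.mk' (AddMonoidHom.mk' δ hδ.map_add).toIntLinearMap
    (fun a b => by
      change δ (a * b) = a • δ b + b • δ a
      rw [hδ.leibniz]; simp only [smul_eq_mul]; ring)⟩
  letI := Differential.differentialFiniteDimensional L M
  have : DifferentialAlgebra L M := Differential.differentialAlgebraFiniteDimensional
  refine ⟨fun x => Differential.deriv x, ⟨fun x y => map_add _ x y, fun x y => ?_⟩, fun c => ?_⟩
  · rw [Derivation.leibniz]; simp only [smul_eq_mul]; ring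
  · exact DifferentialAlgebra.deriv_algebraMap c

theorem aux_normalize {M A : Type*} [Field M] [CharZero M] [Ring A] [Algebra M A] [Nontrivial A]
    {δ : M → M} (hδ : IsRingDeriv δ)
    {D : A → A} (hD : IsRingDeriv D) (hDs : ∀ (y : M) (a : A), D (y • a) = δ y • a + y • D a)
    {w : A} {c s e : M} (hs : s * s = c) (hc : c ≠ 0) (hw : w * w = algebraMap M A c)
    (hDw : D w = e • w) : (s⁻¹ • w) * (s⁻¹ • w) = 1 ∧ D (s⁻¹ • w) = 0 := by
  have hs0 : s ≠ 0 := by rintro rfl; simp at hs; exact hc hs.symm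
  have hsq : (s⁻¹ • w) * (s⁻¹ • w) = 1 := by
    rw [smul_mul_smul_comm, hw, Algebra.algebraMap_eq_smul_one, smul_smul, ← hs,
      show s⁻¹ * s⁻¹ * (s * s) = 1 by field_simp, one_smul]
  refine ⟨hsq, ?_⟩
  have h1 : D (s⁻¹ • w) = (δ s⁻¹ * s + e) • (s⁻¹ • w) := by
    rw [hDs, hDw, smul_smul, smul_smul, ← add_smul]
    congr 1
    field_simp
  have hDone : D 1 = 0 := by
    have := hD.leibniz 1 1
    simpa using this
  have h2 := hD.leibniz (s⁻¹ • w) (s⁻¹ • w)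
  rw [h1, hsq, hDone] at h2
  generalize s⁻¹ • w = W at *
  rw [smul_mul_assoc, mul_smul_comm, hsq, ← add_smul, ← two_mul] at h2
  have h3 := (smul_eq_zero.1 h2.symm).resolve_right one_ne_zero
  have h4 := (mul_eq_zero.1 h3).resolve_left two_ne_zero
  rw [h1, h4, zero_smul]

theorem aux_fwd {k : Type*} [Field k] [CharZero k] {δk : k → k}
    {Q : Type*} [Ring Q] [Algebra k Q] (hrank : Module.finrank k Q = 4)
    {d : Q → Q} (hd : IsRingDeriv d) (hdk : RestrictsTo δk d)
    {L M : Type*} [Field L] [Algebra k L] [Field M] [Algebra k M] [Algebra L M]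
    [IsScalarTower k L M] [FiniteDimensional L M]
    {δL : L → L} (hδL : IsRingDeriv δL) (hδLr : RestrictsTo δk δL)
    {D : L ⊗[k] Q → L ⊗[k] Q} (hD : IsRingDeriv D)
    (hDt : ∀ (y : L) (x : Q), D (y ⊗ₜ[k] x) = δL y ⊗ₜ[k] x + y ⊗ₜ[k] d x)
    {w₁ w₂ : L ⊗[k] Q} {c₁ c₂ e₁ e₂ : L} (hc₁ : c₁ ≠ 0) (hc₂ : c₂ ≠ 0)
    (h1 : w₁ * w₁ = algebraMap L (L ⊗[k] Q) c₁)
    (h2 : w₂ * w₂ = algebraMap L (L ⊗[k] Q) c₂)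
    (h12 : w₂ * w₁ = -(w₁ * w₂)) (hD1 : D w₁ = e₁ • w₁) (hD2 : D w₂ = e₂ • w₂)
    {s₁ s₂ : M} (hs₁ : s₁ * s₁ = algebraMap L M c₁) (hs₂ : s₂ * s₂ = algebraMap L M c₂) :
    ∃ δM : M → M, IsRingDeriv δM ∧ RestrictsTo δk δM ∧ DiffSplits k Q d M δM := by
  haveI : CharZero L := charZero_of_injective_algebraMap (algebraMap k L).injective
  haveI : CharZero M := charZero_of_injective_algebraMap (algebraMap k M).injective
  obtain ⟨δ, hδ, hδL'⟩ := aux_ext (M := M) δL hδL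
  have hδr : RestrictsTo δk δ := fun c => by
    rw [IsScalarTower.algebraMap_apply k L M, hδL', hδLr, ← IsScalarTower.algebraMap_apply k L M]
  obtain ⟨E, hE, hEt⟩ := aux_tensor hd hdk hδ hδr
  refine ⟨δ, hδ, hδr, E, hE, hEt, ?_⟩
  have hEs := aux_smul hδ hE hEt
  have hrM : Module.finrank M (M ⊗[k] Q) = 4 := by rw [Module.finrank_baseChange, hrank]
  haveI : Nontrivial (M ⊗[k] Q) := Module.nontrivial_of_finrank_pos (R := M) (by omega)
  let ι : L ⊗[k] Q →ₐ[k] M ⊗[k] Q :=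
    Algebra.TensorProduct.map (IsScalarTower.toAlgHom k L M) (AlgHom.id k Q)
  have hιt : ∀ (y : L) (x : Q), ι (y ⊗ₜ[k] x) = (algebraMap L M y) ⊗ₜ[k] x := fun y x => rfl
  have hιs : ∀ (y : L) z, ι (y • z) = (algebraMap L M y) • ι z := fun y z => by
    induction z with
    | zero => simp
    | add a b ha hb => simp only [smul_add, map_add, ha, hb]
    | tmul a b => simp only [TensorProduct.smul_tmul', hιt, smul_eq_mul, map_mul]
  have hιD : ∀ z, E (ι z) = ι (D z) := fun z => by
    induction z with
    | zero =>
      have a1 : E 0 = 0 := by simpa using hE.map_add 0 0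
      have a2 : D 0 = 0 := by simpa using hD.map_add 0 0
      simp [a1, a2]
    | add a b ha hb => simp only [map_add, hE.map_add, hD.map_add, ha, hb]
    | tmul a b => simp only [hιt, hEt, hDt, map_add, hδL' a]
  have key : ∀ (w : L ⊗[k] Q) (c : L), w * w = algebraMap L _ c →
      ι w * ι w = algebraMap M _ (algebraMap L M c) := fun w c h => by
    rw [← map_mul, h, Algebra.algebraMap_eq_smul_one (A := L ⊗[k] Q), hιs, map_one,
      Algebra.algebraMap_eq_smul_one (A := M ⊗[k] Q)]
  obtain ⟨p1, q1⟩ := aux_normalize hδ hE hEs (e := algebraMap L M e₁) hs₁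
    ((map_ne_zero _).2 hc₁) (key _ _ h1) (by rw [hιD, hD1, hιs])
  obtain ⟨p2, q2⟩ := aux_normalize hδ hE hEs (e := algebraMap L M e₂) hs₂
    ((map_ne_zero _).2 hc₂) (key _ _ h2) (by rw [hιD, hD2, hιs])
  refine aux_split hrM δ hδ E hE hEs _ _ p1 p2 ?_ q1 q2
  rw [smul_mul_smul_comm, smul_mul_smul_comm, ← map_mul, ← map_mul, h12, map_neg, smul_neg,
    mul_comm]

theorem aux_sqrt {L : Type u} [Field L] (c₁ c₂ : L) : ∃ (M : Type u) (_ : Field M) (_ : Algebra L M),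
    FiniteDimensional L M ∧ ∃ s₁ s₂ : M, s₁ * s₁ = algebraMap L M c₁ ∧
      s₂ * s₂ = algebraMap L M c₂ := by
  have h : ∀ (F : Type u) [Field F] (c : F), ∃ (M : Type u) (_ : Field M) (_ : Algebra F M),
    FiniteDimensional F M ∧ ∃ s : M, s * s = algebraMap F M c := by
    intro F _ c
    let p : Polynomial F := Polynomial.X ^ 2 - Polynomial.C c
    refine ⟨p.SplittingField, inferInstance, inferInstance, inferInstance, ?_⟩
    have hs := Polynomial.SplittingField.splits p
    obtain ⟨s, hs⟩ := hs.exists_eval_eq_zero (by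
      rw [Polynomial.degree_map, Polynomial.degree_X_pow_sub_C (by norm_num)]; norm_num)
    refine ⟨s, ?_⟩
    simp [p] at hs
    rw [← sq]; exact sub_eq_zero.1 hs
  obtain ⟨M, _, _, hM, s, hs⟩ := h L c₁
  obtain ⟨N, _, _, hN, t, ht⟩ := h M (algebraMap L M c₂)
  letI : Algebra L N := ((algebraMap M N).comp (algebraMap L M)).toAlgebra
  haveI : IsScalarTower L M N := IsScalarTower.of_algebraMap_eq fun _ => rfl
  refine ⟨N, inferInstance, inferInstance, FiniteDimensional.trans L M N, algebraMap M N s, t, ?_, ht⟩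
  rw [← map_mul, hs]; rfl

theorem aux_pure {k : Type*} [Field k] {β : k} (hβ : β ≠ 0) {Q : Type*} [Ring Q] [Algebra k Q]
    {a b : Q} (hb : b * b = algebraMap k Q β) (hab : b * a = -(a * b))
    {L : Type*} [Field L] [CharZero L] [Algebra k L]
    (φ : (L ⊗[k] Q) ≃ₐ[L] Matrix (Fin 2) (Fin 2) L) :
    (φ (1 ⊗ₜ a)).trace = 0 := by
  have h1 : (1 ⊗ₜ b : L ⊗[k] Q) * (1 ⊗ₜ b) = algebraMap k L β • 1 := by
    rw [Algebra.TensorProduct.tmul_mul_tmul, hb, Algebra.algebraMap_eq_smul_one, mul_one,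
      TensorProduct.tmul_smul, algebraMap_smul, Algebra.TensorProduct.one_def]
  have h2 : (1 ⊗ₜ b : L ⊗[k] Q) * (1 ⊗ₜ a) = -((1 ⊗ₜ a) * (1 ⊗ₜ b)) := by
    rw [Algebra.TensorProduct.tmul_mul_tmul, hab, Algebra.TensorProduct.tmul_mul_tmul,
      TensorProduct.tmul_neg]
  generalize (1 ⊗ₜ b : L ⊗[k] Q) = B at *
  generalize (1 ⊗ₜ a : L ⊗[k] Q) = A at *
  have h3 := congrArg φ h1
  have h4 := congrArg φ h2
  simp only [map_mul, map_neg, map_smul, map_one] at h3 h4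
  have h5 : (φ B * φ A * φ B).trace = algebraMap k L β * (φ A).trace := by
    rw [Matrix.trace_mul_comm, ← mul_assoc, h3]; simp; rw [Algebra.smul_def]
  have h6 : (φ B * φ A * φ B).trace = - (algebraMap k L β * (φ A).trace) := by
    rw [h4, neg_mul, mul_assoc, h3]; simp; rw [Algebra.smul_def]
  have h7 : algebraMap k L β * (φ A).trace = 0 := self_eq_neg.1 (h5.symm.trans h6)
  exact (mul_eq_zero.1 h7).resolve_left ((map_ne_zero _).2 hβ)

/-- A derivation `d` on the quaternion algebra `Q = (α, β)_k`
restricting to `′` on `k` becomes standard over some finite field extension of `k`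
if and only if `(Q, d)` is split by some finite differential field extension of
`(k, ′)`. -/
theorem stmt_19 (k : Type u) [Field k] [CharZero k]
    (δk : k → k) (hδk : IsRingDeriv δk)
    (α β : k) (hα : α ≠ 0) (hβ : β ≠ 0)
    (Q : Type u) [Ring Q] [Algebra k Q]
    (u v : Q) (hu : u * u = algebraMap k Q α) (hv : v * v = algebraMap k Q β)
    (huv : v * u = -(u * v))
    (bQ : Module.Basis (Fin 4) k Q) (hbQ : ⇑bQ = ![1, u, v, u * v])
    (d : Q → Q) (hd : IsRingDeriv d) (hdk : RestrictsTo δk d) :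
    (∃ (L : Type u) (_ : Field L) (_ : Algebra k L) (δL : L → L),
        IsRingDeriv δL ∧ RestrictsTo δk δL ∧ FiniteDimensional k L ∧
        ∃ D : L ⊗[k] Q → L ⊗[k] Q,
          IsRingDeriv D ∧
          (∀ (y : L) (x : Q), D (y ⊗ₜ[k] x) = δL y ⊗ₜ[k] x + y ⊗ₜ[k] d x) ∧
          ∃ w₁ w₂ : L ⊗[k] Q,
            w₁ ∈ Submodule.span L
              ({(1 : L) ⊗ₜ[k] u, (1 : L) ⊗ₜ[k] v,
                (1 : L) ⊗ₜ[k] (u * v)} : Set (L ⊗[k] Q)) ∧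
            w₂ ∈ Submodule.span L
              ({(1 : L) ⊗ₜ[k] u, (1 : L) ⊗ₜ[k] v,
                (1 : L) ⊗ₜ[k] (u * v)} : Set (L ⊗[k] Q)) ∧
            (∃ c : L, c ≠ 0 ∧ w₁ * w₁ = algebraMap L (L ⊗[k] Q) c) ∧
            (∃ c : L, c ≠ 0 ∧ w₂ * w₂ = algebraMap L (L ⊗[k] Q) c) ∧
            w₂ * w₁ = -(w₁ * w₂) ∧
            (∃ c : L, D w₁ = c • w₁) ∧
            (∃ c : L, D w₂ = c • w₂)) ↔
    (∃ (L : Type u) (_ : Field L) (_ : Algebra k L) (δL : L → L),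
        IsRingDeriv δL ∧ RestrictsTo δk δL ∧ FiniteDimensional k L ∧
        DiffSplits k Q d L δL) := by
  have hrank : Module.finrank k Q = 4 := by
    rw [Module.finrank_eq_card_basis bQ]; simp
  constructor
  · rintro ⟨L, _, _, δL, hδL, hδLr, hfin, D, hD, hDt, w₁, w₂, -, -, ⟨c₁, hc₁, h1⟩, ⟨c₂, hc₂, h2⟩,
      h12, ⟨e₁, hD1⟩, ⟨e₂, hD2⟩⟩
    obtain ⟨M, _, _, hM, s₁, s₂, hs₁, hs₂⟩ := aux_sqrt c₁ c₂
    letI : Algebra k M := ((algebraMap L M).comp (algebraMap k L)).toAlgebra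
    haveI : IsScalarTower k L M := IsScalarTower.of_algebraMap_eq fun _ => rfl
    obtain ⟨δM, a1, a2, a3⟩ := aux_fwd hrank hd hdk hδL hδLr hD hDt hc₁ hc₂ h1 h2 h12 hD1 hD2 hs₁ hs₂
    exact ⟨M, inferInstance, inferInstance, δM, a1, a2, FiniteDimensional.trans k L M, a3⟩
  · rintro ⟨L, _, _, δL, hδL, hδLr, hfin, D, hD, hDt, φ, hφ⟩
    haveI : CharZero L := charZero_of_injective_algebraMap (algebraMap k L).injective
    refine ⟨L, inferInstance, inferInstance, δL, hδL, hδLr, hfin, D, hD, hDt, ?_⟩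
    have hδ0 : δL 0 = 0 := by simpa using hδL.map_add 0 0
    have hδ1 : δL 1 = 0 := by simpa using hδL.leibniz 1 1
    have hδn : δL (-1) = 0 := by
      have := hδL.map_add 1 (-1)
      rw [add_neg_cancel, hδ0, hδ1, zero_add] at this
      exact this.symm
    have tu : (φ (1 ⊗ₜ u)).trace = 0 := aux_pure hβ hv huv φ
    have tv : (φ (1 ⊗ₜ v)).trace = 0 := aux_pure hα hu (by rw [huv, neg_neg]) φ
    have tuv : (φ (1 ⊗ₜ (u * v))).trace = 0 := aux_pure hα hu (by
      rw [mul_assoc u v u, huv, mul_neg, neg_neg]) φ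
    have hpure : ∀ X : Matrix (Fin 2) (Fin 2) L, X.trace = 0 → φ.symm X ∈ Submodule.span L
              ({(1 : L) ⊗ₜ[k] u, (1 : L) ⊗ₜ[k] v,
                (1 : L) ⊗ₜ[k] (u * v)} : Set (L ⊗[k] Q)) := by
      intro X hX
      have hsum := (bQ.baseChange L).sum_repr (φ.symm X)
      simp only [Fin.sum_univ_four, Module.Basis.baseChange_apply, hbQ] at hsum
      generalize (bQ.baseChange L).repr (φ.symm X) = f at hsum
      simp at hsum
      have ht := congrArg (fun z => (φ z).trace) hsum
      simp only [map_add, map_smul, AlgEquiv.apply_symm_apply, hX, Matrix.trace_add,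
        Matrix.trace_smul, tu, tv, tuv, ← Algebra.TensorProduct.one_def, map_one,
        Matrix.trace_one] at ht
      have hf0 : f 0 = 0 := by simpa using ht
      rw [hf0, zero_smul, zero_add] at hsum
      rw [← hsum]
      refine add_mem (add_mem ?_ ?_) ?_ <;>
        exact Submodule.smul_mem _ _ (Submodule.subset_span (by simp))
    refine ⟨φ.symm !![1, 0; 0, -1], φ.symm !![0, 1; 1, 0], hpure _ (by simp [Matrix.trace_fin_two]),
      hpure _ (by simp [Matrix.trace_fin_two]), ⟨1, one_ne_zero, ?_⟩, ⟨1, one_ne_zero, ?_⟩, ?_,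
      ⟨0, ?_⟩, ⟨0, ?_⟩⟩
    · rw [← map_mul, map_one, ← map_one φ.symm]; congr 1; simp [Matrix.one_fin_two]
    · rw [← map_mul, map_one, ← map_one φ.symm]; congr 1; simp [Matrix.one_fin_two]
    · rw [← map_mul φ.symm, ← map_mul φ.symm, ← map_neg φ.symm]; congr 1; simp
    · apply φ.injective
      rw [hφ, AlgEquiv.apply_symm_apply, zero_smul, map_zero]
      ext i j; fin_cases i <;> fin_cases j <;> simp [hδ0, hδ1, hδn]
    · apply φ.injective
      rw [hφ, AlgEquiv.apply_symm_apply, zero_smul, map_zero]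
      ext i j; fin_cases i <;> fin_cases j <;> simp [hδ0, hδ1, hδn]
end
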